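/- arXiv:1906.04417 — 4 statements merged into one kernel-verified Lean document; each statement's English description precedes it below -/
import Mathlib

section
/- Let f_1, ..., f_n ∈ L^1([0,1]; ℝ). Then for every ε > 0 there exists h ∈ C^∞([0,1]; S^1) with ‖h‖_{W^{1,1}} < 1 + π(2n − 1) + ε such that ∫_0^1 f_j(x) h(x) dx = 0 for all j = 1, ..., n. -/
open MeasureTheory

/-!
Take `h = exp (i ψ)` with `ψ` a small perturbation of `arctan (m p)`, where `p` is a polynomial of
degree at most `n` and `m` is large. The total variation of `arctan ∘ q` for a polynomial `q` is at
most `π deg q`, because the argument of `1 + i q` is a sum of one monotone term of variation at most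
`π` for each complex root.

As `m → ∞`, `cos (arctan (m p))` tends to zero in `L¹`, uniformly over normalized `p`. Hence a small
correction `ψ = φ + w sin φ` of `φ = arctan (m p)`, found by a contraction argument, annihilates the
moments of `cos ψ`. The correction depends continuously and evenly on `p`, so the `n` moments of
`sin ψ` are odd continuous functions of `p` in the unit sphere of an `(n + 1)`-dimensional space,
and the Borsuk–Ulam theorem gives a common zero.

The Borsuk–Ulam theorem follows from Tucker's lemma, which is proved by Fan's parity count of the
alternating simplices in an iterated barycentric subdivision of the cross-polytope boundary.
-/

noncomputable section

open Metric
open scoped ContDiff Real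

namespace LazarevLieb

section Topology

open Finset MvPolynomial

section Chain

variable {E F : Type*}

/-- Simplicial chains modulo two with vertices in `E`, encoded as polynomials over `𝔽₂` in
indeterminates indexed by `E`: a monomial of degree `k` is the `(k - 1)`-simplex on its variables,
which may be degenerate, and `1` is the empty simplex. The cone with apex `v` over a chain is then
multiplication by `X v`. -/
abbrev Chain (E : Type*) := MvPolynomial E (ZMod 2)

/-- The augmented boundary operator on chains modulo two. Deleting each vertex of a simplex in turn
is the derivation of the polynomial ring that takes every indeterminate to `1`. -/
def boundary : Derivation (ZMod 2) (Chain E) (Chain E) :=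
  mkDerivation (ZMod 2) fun _ => 1

@[simp]
theorem boundary_X (v : E) : boundary (X v) = 1 := mkDerivation_X _ _ v

theorem boundary_X_mul (v : E) (c : Chain E) : boundary (X v * c) = c + X v * boundary c := by
  simp [add_comm]

theorem boundary_boundary (c : Chain E) : boundary (boundary c) = 0 := by
  induction c using MvPolynomial.induction_on with
  | C a => simp
  | add p q hp hq => simp [hp, hq]
  | mul_X p v hp =>
    rw [mul_comm, boundary_X_mul, map_add, boundary_X_mul, hp, mul_zero, add_zero,
      CharTwo.add_self_eq_zero]

theorem boundary_rename (g : E → F) (c : Chain E) :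
    boundary (rename g c) = rename g (boundary c) := by
  induction c using MvPolynomial.induction_on with
  | C a => simp
  | add p q hp hq => simp [hp, hq]
  | mul_X p v hp => simp [hp]

theorem linearMap_mem_of_mem_restrictSupport {M : Type*} [AddCommGroup M] [Module (ZMod 2) M]
    {s : Set (E →₀ ℕ)} {N : Submodule (ZMod 2) M} (L : Chain E →ₗ[ZMod 2] M)
    (h : ∀ m ∈ s, L (monomial m 1) ∈ N) {c : Chain E} (hc : c ∈ restrictSupport (ZMod 2) s) :
    L c ∈ N := by
  suffices restrictSupport (ZMod 2) s ≤ N.comap L from this hc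
  rw [restrictSupport_eq_span, Submodule.span_le]
  rintro _ ⟨m, hm, rfl⟩
  exact h m hm

theorem X_mul_monomial (v : E) (m : E →₀ ℕ) :
    (X v * monomial m 1 : Chain E) = monomial (Finsupp.single v 1 + m) 1 := by
  rw [X, monomial_mul, one_mul]

theorem mem_support_single_add (v : E) (m : E →₀ ℕ) :
    v ∈ (Finsupp.single v 1 + m).support := by
  simp

theorem X_mul_mem_restrictSupport {s t : Set (E →₀ ℕ)} {v : E}
    (h : ∀ m ∈ s, Finsupp.single v 1 + m ∈ t) {c : Chain E}
    (hc : c ∈ restrictSupport (ZMod 2) s) : X v * c ∈ restrictSupport (ZMod 2) t := by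
  refine linearMap_mem_of_mem_restrictSupport (LinearMap.mulLeft (ZMod 2) (X v)) (fun m hm => ?_) hc
  rw [LinearMap.mulLeft_apply, X_mul_monomial, monomial_mem_restrictSupport]
  exact .inl (h m hm)

theorem boundary_monomial_mem (m : E →₀ ℕ) :
    boundary (monomial m 1) ∈ restrictSupport (ZMod 2)
      {f : E →₀ ℕ | f.support ⊆ m.support ∧ f.degree + 1 = m.degree} := by
  rw [boundary, mkDerivation_monomial, one_smul]
  refine Submodule.sum_mem _ fun v hv => ?_
  have hdeg : (m - Finsupp.single v 1).degree + 1 = m.degree := by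
    conv_rhs => rw [← tsub_add_cancel_of_le (Finsupp.single_le_iff.2
      (Nat.one_le_iff_ne_zero.2 (Finsupp.mem_support_iff.1 hv)))]
    rw [map_add, Finsupp.degree_single]
  simp only [smul_eq_mul, mul_one]
  exact (monomial_mem_restrictSupport _).2 (.inl ⟨Finsupp.support_mono tsub_le_self, hdeg⟩)

end Chain

section Subdivision

variable {E F : Type*} [AddCommGroup E] [Module ℝ E] [AddCommGroup F] [Module ℝ F]

/-- The average of the vertices of a simplex, counted with multiplicity; it is `0` for the empty
simplex. -/
def barycenter (m : E →₀ ℕ) : E := (m.degree : ℝ)⁻¹ • Finsupp.weight id m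

theorem barycenter_mapDomain (g : E →ₗ[ℝ] F) (m : E →₀ ℕ) :
    barycenter (m.mapDomain g) = g (barycenter m) := by
  rw [barycenter, barycenter, Finsupp.degree_mapDomain, map_smul]
  simp [Finsupp.weight_apply, Finsupp.sum_mapDomain_index, add_smul, map_finsuppSum]

theorem barycenter_mem_convexHull {m : E →₀ ℕ} (hm : m ≠ 0) :
    barycenter m ∈ convexHull ℝ (m.support : Set E) := by
  have hpos : 0 < ∑ v ∈ m.support, (m v : ℝ) := by
    rw [← Nat.cast_sum, ← Finsupp.degree_apply, Nat.cast_pos, Nat.pos_iff_ne_zero]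
    exact mt (Finsupp.degree_eq_zero_iff m).1 hm
  have h := centerMass_mem_convexHull m.support (fun v _ => Nat.cast_nonneg (m v)) hpos
    (fun v hv => mem_coe.2 hv)
  simpa [barycenter, centerMass, Finsupp.weight_apply, Finsupp.sum, Finsupp.degree_apply,
    Nat.cast_smul_eq_nsmul] using h

/-- Barycentric subdivision of chains of `k`-vertex simplices: the cone from the barycenter of a
simplex over the subdivision of its boundary. The recursion is on the number `k` of vertices, and
the value on chains of other degrees is irrelevant. -/
def subdivision : ℕ → Chain E →ₗ[ZMod 2] Chain E
  | 0 => LinearMap.id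
  | k + 1 => (basisMonomials E (ZMod 2)).constr (ZMod 2) fun m =>
      X (barycenter m) * subdivision k (boundary (monomial m 1))

theorem subdivision_succ_monomial (k : ℕ) (m : E →₀ ℕ) :
    subdivision (k + 1) (monomial m 1) =
      X (barycenter m) * subdivision k (boundary (monomial m 1)) :=
  (basisMonomials E (ZMod 2)).constr_basis (ZMod 2) _ m

theorem boundary_subdivision (k : ℕ) (c : Chain E) :
    boundary (subdivision (k + 1) c) = subdivision k (boundary c) := by
  suffices h : boundary.toLinearMap ∘ₗ subdivision (k + 1) =
      subdivision k ∘ₗ (boundary (E := E)).toLinearMap from LinearMap.congr_fun h c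
  refine (basisMonomials E (ZMod 2)).ext fun m => ?_
  suffices boundary (subdivision k (boundary (monomial m 1))) = 0 by
    simp [subdivision_succ_monomial, this]
  cases k with
  | zero => exact boundary_boundary _
  | succ k => rw [boundary_subdivision k, boundary_boundary, map_zero]

theorem rename_subdivision (g : E →ₗ[ℝ] F) (k : ℕ) (c : Chain E) :
    rename g (subdivision k c) = subdivision k (rename g c) := by
  suffices h : (rename g).toLinearMap ∘ₗ subdivision k =
      subdivision k ∘ₗ (rename (R := ZMod 2) g).toLinearMap from LinearMap.congr_fun h c
  refine (basisMonomials E (ZMod 2)).ext fun m => ?_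
  cases k with
  | zero => rfl
  | succ k =>
    simp [subdivision_succ_monomial, rename_monomial, barycenter_mapDomain,
      rename_subdivision g k, ← boundary_rename]

theorem boundary_subdivision_iterate (k i : ℕ) (c : Chain E) :
    boundary ((subdivision (k + 1))^[i] c) = (subdivision k)^[i] (boundary c) :=
  Function.Semiconj.iterate_right (boundary_subdivision k) i c

theorem rename_subdivision_iterate (g : E →ₗ[ℝ] F) (k i : ℕ) (c : Chain E) :
    rename g ((subdivision k)^[i] c) = (subdivision k)^[i] (rename g c) :=
  Function.Semiconj.iterate_right (rename_subdivision g k) i c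

end Subdivision

section Mesh

variable {E : Type*} [NormedAddCommGroup E] [NormedSpace ℝ E]

/-- The simplices with `k` vertices, counted with multiplicity, that lie in `K` and have diameter
at most `r`. -/
def smallSimplices (k : ℕ) (K : Set E) (r : ℝ) : Set (E →₀ ℕ) :=
  {m | m.degree = k ∧ convexHull ℝ (m.support : Set E) ⊆ K ∧
    ∀ v ∈ m.support, ∀ w ∈ m.support, dist v w ≤ r}

theorem norm_weight_sub_degree_smul_le {m : E →₀ ℕ} {x : E} (hx : x ∈ m.support) {r : ℝ}
    (hr : ∀ v ∈ m.support, dist v x ≤ r) :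
    ‖Finsupp.weight id m - (m.degree : ℝ) • x‖ ≤ (m.degree - 1) * r := by
  classical
  have hr₀ : 0 ≤ r := by simpa using hr x hx
  have hmx : (1 : ℝ) ≤ m x := by
    exact_mod_cast Nat.one_le_iff_ne_zero.2 (Finsupp.mem_support_iff.1 hx)
  have hdegree : (m.degree : ℝ) = ∑ v ∈ m.support.erase x, (m v : ℝ) + m x := by
    rw [sum_erase_add _ _ hx, Finsupp.degree_apply, Nat.cast_sum]
  have hsum : Finsupp.weight id m - (m.degree : ℝ) • x =
      ∑ v ∈ m.support.erase x, (m v : ℝ) • (v - x) := by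
    rw [sum_erase _ (by rw [sub_self, smul_zero])]
    simp [Finsupp.weight_apply, Finsupp.sum, Finsupp.degree_apply, smul_sub, sum_sub_distrib,
      sum_smul, Nat.cast_smul_eq_nsmul]
  calc ‖Finsupp.weight id m - (m.degree : ℝ) • x‖
      = ‖∑ v ∈ m.support.erase x, (m v : ℝ) • (v - x)‖ := by rw [hsum]
    _ ≤ ∑ v ∈ m.support.erase x, (m v : ℝ) * r := by
        refine norm_sum_le_of_le _ fun v hv => ?_
        rw [norm_smul, Real.norm_natCast, ← dist_eq_norm]
        gcongr
        exact hr v (mem_of_mem_erase hv)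
    _ ≤ (m.degree - 1) * r := by
        rw [← sum_mul]
        gcongr
        linarith

theorem dist_barycenter_le {m : E →₀ ℕ} {N : ℕ} (hN : m.degree ≤ N + 1) {x : E}
    (hx : x ∈ m.support) {r : ℝ} (hr : ∀ v ∈ m.support, dist v x ≤ r) :
    dist x (barycenter m) ≤ N / (N + 1) * r := by
  have hr₀ : 0 ≤ r := by simpa using hr x hx
  have hpos : 0 < (m.degree : ℝ) := by
    rw [Nat.cast_pos, Nat.pos_iff_ne_zero, Ne, Finsupp.degree_eq_zero_iff]
    rintro rfl
    simp at hx
  have hsub : barycenter m - x = (m.degree : ℝ)⁻¹ • (Finsupp.weight id m - (m.degree : ℝ) • x) := by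
    rw [smul_sub, inv_smul_smul₀ hpos.ne', barycenter]
  calc dist x (barycenter m)
      ≤ (m.degree : ℝ)⁻¹ * ((m.degree - 1) * r) := by
        rw [dist_comm, dist_eq_norm, hsub, norm_smul, Real.norm_of_nonneg (by positivity)]
        gcongr
        exact norm_weight_sub_degree_smul_le hx hr
    _ = (1 - (m.degree : ℝ)⁻¹) * r := by field_simp
    _ ≤ (1 - (N + 1 : ℝ)⁻¹) * r := by
        gcongr
        exact_mod_cast hN
    _ = N / (N + 1) * r := by field_simp; ring

theorem single_barycenter_add_mem_smallSimplices {m q : E →₀ ℕ} {k N : ℕ} (hm : m ≠ 0)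
    (hN : m.degree ≤ N + 1) {r : ℝ} (hr : ∀ v ∈ m.support, ∀ w ∈ m.support, dist v w ≤ r)
    (hq : q ∈ smallSimplices k (convexHull ℝ (m.support : Set E)) (N / (N + 1) * r)) :
    Finsupp.single (barycenter m) 1 + q ∈
      smallSimplices (k + 1) (convexHull ℝ (m.support : Set E)) (N / (N + 1) * r) := by
  classical
  obtain ⟨hdeg, hsub, hdist⟩ := hq
  have hball : convexHull ℝ (m.support : Set E) ⊆ closedBall (barycenter m) (N / (N + 1) * r) :=
    convexHull_min (fun x hx => dist_barycenter_le hN hx fun v hv => hr v hv x hx)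
      (convex_closedBall _ _)
  have hcenter := barycenter_mem_convexHull hm
  have hvertex : ∀ v ∈ q.support, v ∈ convexHull ℝ (m.support : Set E) := fun v hv =>
    hsub (subset_convexHull ℝ _ hv)
  have hmem : ∀ v ∈ (Finsupp.single (barycenter m) 1 + q).support,
      v = barycenter m ∨ v ∈ q.support := fun v hv =>
    (mem_union.1 (Finsupp.support_add hv)).imp_left
      fun h => mem_singleton.1 (Finsupp.support_single_subset h)
  refine ⟨by rw [map_add, Finsupp.degree_single, hdeg, add_comm],
    convexHull_min (fun v hv => ?_) (convex_convexHull ℝ _), fun v hv w hw => ?_⟩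
  · rcases hmem v hv with rfl | hv
    exacts [hcenter, hvertex v hv]
  · rcases hmem v hv with rfl | hv' <;> rcases hmem w hw with rfl | hw'
    · exact hball hcenter
    · rw [dist_comm]; exact hball (hvertex w hw')
    · exact hball (hvertex v hv')
    · exact hdist v hv' w hw'

theorem subdivision_monomial_mem {N k : ℕ} (hN : k ≤ N + 1) {m : E →₀ ℕ} (hm : m.degree = k)
    {r : ℝ} (hr : ∀ v ∈ m.support, ∀ w ∈ m.support, dist v w ≤ r) :
    subdivision k (monomial m 1) ∈ restrictSupport (ZMod 2)
      (smallSimplices k (convexHull ℝ (m.support : Set E)) (N / (N + 1) * r)) := by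
  induction k generalizing m with
  | zero =>
    obtain rfl := (Finsupp.degree_eq_zero_iff m).1 hm
    exact (monomial_mem_restrictSupport _).2 (.inl ⟨hm, subset_rfl, by simp⟩)
  | succ k ih =>
    have hm₀ : m ≠ 0 := by rintro rfl; simp at hm
    rw [subdivision_succ_monomial]
    refine X_mul_mem_restrictSupport
      (fun q => single_barycenter_add_mem_smallSimplices hm₀ (hm.trans_le hN) hr) ?_
    refine linearMap_mem_of_mem_restrictSupport _ ?_ (boundary_monomial_mem m)
    rintro f ⟨hsub, hdeg⟩
    refine restrictSupport_mono _ ?_ (ih (by omega) (by omega)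
      fun v hv w hw => hr v (hsub hv) w (hsub hw))
    rintro q ⟨hq, hhull, hdist⟩
    exact ⟨hq, hhull.trans (convexHull_mono (coe_subset.2 hsub)), hdist⟩

theorem subdivision_iterate_mem {N k : ℕ} (hN : k ≤ N + 1) {K : Set E} {r : ℝ} {c : Chain E}
    (hc : c ∈ restrictSupport (ZMod 2) (smallSimplices k K r)) (i : ℕ) :
    (subdivision k)^[i] c ∈
      restrictSupport (ZMod 2) (smallSimplices k K ((N / (N + 1)) ^ i * r)) := by
  induction i with
  | zero => simpa using hc
  | succ i ih =>
    rw [Function.iterate_succ_apply']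
    refine linearMap_mem_of_mem_restrictSupport _ ?_ ih
    rintro m ⟨hdeg, hsub, hdist⟩
    refine restrictSupport_mono _ ?_ (subdivision_monomial_mem hN hdeg hdist)
    rintro q ⟨hq, hhull, hqdist⟩
    exact ⟨hq, hhull.trans hsub, by rwa [pow_succ', mul_assoc]⟩

end Mesh

section AlternatingCount

variable {L : Type*} [LinearOrder L]

theorem finsupp_induction_on_min {motive : (L →₀ ℕ) → Prop} (zero : motive 0)
    (single_add : ∀ a m, (∀ b ∈ m.support, a ≤ b) → motive m → motive (Finsupp.single a 1 + m))
    (m : L →₀ ℕ) : motive m := by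
  induction hd : m.degree generalizing m with
  | zero => rwa [(Finsupp.degree_eq_zero_iff m).1 hd]
  | succ d ih =>
    have hne : m.support.Nonempty := Finsupp.support_nonempty_iff.2 (by rintro rfl; simp at hd)
    have hmin := m.support.min'_mem hne
    have hcancel := Finsupp.sub_add_single_one_cancel (Finsupp.mem_support_iff.1 hmin)
    have hdeg : (m - Finsupp.single (m.support.min' hne) 1).degree = d := by
      rw [← hcancel, map_add, Finsupp.degree_single] at hd
      omega
    rw [← hcancel, add_comm]
    exact single_add _ _ (fun b hb => min'_le _ _ (Finsupp.support_mono tsub_le_self hb))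
      (ih _ hdeg)

/-- `1` if the list alternates, starting with the given value, and `0` otherwise. -/
def alternation : Bool → List Bool → ZMod 2
  | _, [] => 1
  | b, c :: l => if c = b then alternation (!b) l else 0

/-- The number, modulo two, of simplices of a chain with ordered vertices whose vertices, in
increasing order, have alternating signs starting with `b`. -/
def altCount (sign : L → Bool) (b : Bool) : Chain L →ₗ[ZMod 2] ZMod 2 :=
  (basisMonomials L (ZMod 2)).constr (ZMod 2) fun m =>
    alternation b ((m.toMultiset.sort (· ≤ ·)).map sign)

variable {sign : L → Bool}

theorem altCount_monomial (b : Bool) (m : L →₀ ℕ) :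
    altCount sign b (monomial m 1) = alternation b ((m.toMultiset.sort (· ≤ ·)).map sign) :=
  (basisMonomials L (ZMod 2)).constr_basis (ZMod 2) _ m

theorem altCount_one (b : Bool) : altCount sign b 1 = 1 := by
  rw [one_def, altCount_monomial]
  simp [alternation]

theorem altCount_monomial_single_add (b : Bool) {a : L} {m : L →₀ ℕ}
    (ha : ∀ c ∈ m.support, a ≤ c) :
    altCount sign b (monomial (Finsupp.single a 1 + m) 1) =
      if sign a = b then altCount sign (!b) (monomial m 1) else 0 := by
  have hsort : (Finsupp.single a 1 + m).toMultiset.sort (· ≤ ·) =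
      a :: m.toMultiset.sort (· ≤ ·) := by
    rw [map_add, Finsupp.toMultiset_single, one_smul, Multiset.singleton_add]
    exact Multiset.sort_cons _ _ _ (by simpa using ha)
  rw [altCount_monomial, altCount_monomial, hsort, List.map_cons, alternation]

theorem altCount_X_mul (b : Bool) {a : L} {c : Chain L}
    (hc : c ∈ restrictSupport (ZMod 2) {m : L →₀ ℕ | ∀ d ∈ m.support, a ≤ d}) :
    altCount sign b (X a * c) = if sign a = b then altCount sign (!b) c else 0 := by
  have h := linearMap_mem_of_mem_restrictSupport (N := ⊥)
    (altCount sign b ∘ₗ LinearMap.mulLeft (ZMod 2) (X a) -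
      (if sign a = b then altCount sign (!b) else 0)) (fun m hm => ?_) hc
  · simpa [sub_eq_zero, apply_ite (fun f : Chain L →ₗ[ZMod 2] ZMod 2 => f c)] using h
  · simp only [Submodule.mem_bot, LinearMap.sub_apply, LinearMap.comp_apply,
      LinearMap.mulLeft_apply, X_mul_monomial, altCount_monomial_single_add b hm]
    split_ifs <;> simp

/-- A simplex whose signs fail to alternate at one place only is counted by two of its faces, which
cancel; an alternating one is counted by its first or its last face. -/
theorem altCount_boundary (b : Bool) (c : Chain L) :
    altCount sign b (boundary c) = altCount sign b c + altCount sign (!b) c := by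
  suffices h : altCount sign b ∘ₗ boundary.toLinearMap = altCount sign b + altCount sign (!b) from
    LinearMap.congr_fun h c
  refine (basisMonomials L (ZMod 2)).ext fun m => ?_
  simp only [coe_basisMonomials, LinearMap.comp_apply, Derivation.coeFn_coe, LinearMap.add_apply]
  induction m using finsupp_induction_on_min generalizing b with
  | zero => simp [altCount_one, CharTwo.add_self_eq_zero]
  | single_add a m ha ih =>
    have hface : boundary (monomial m 1) ∈
        restrictSupport (ZMod 2) {f : L →₀ ℕ | ∀ d ∈ f.support, a ≤ d} := by
      refine restrictSupport_mono _ ?_ (boundary_monomial_mem m)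
      exact fun f hf d hd => ha d (hf.1 hd)
    rw [← X_mul_monomial, boundary_X_mul, map_add, altCount_X_mul b hface, X_mul_monomial,
      altCount_monomial_single_add b ha, altCount_monomial_single_add (!b) ha, ih, Bool.not_not]
    by_cases hb : sign a = b
    · simp [hb, add_comm _ (altCount sign b _), CharTwo.add_cancel_left]
    · simp [Bool.eq_not_of_ne hb]

theorem sign_eq_of_altCount_ne_zero {b : Bool} {a : L} {m : L →₀ ℕ} (ha : a ∈ m.support)
    (hmin : ∀ c ∈ m.support, a ≤ c) (hm : altCount sign b (monomial m 1) ≠ 0) : sign a = b := by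
  have hcancel := Finsupp.sub_add_single_one_cancel (Finsupp.mem_support_iff.1 ha)
  rw [← hcancel, add_comm, altCount_monomial_single_add b
    fun c hc => hmin c (Finsupp.support_mono tsub_le_self hc)] at hm
  exact (ite_ne_right_iff.1 hm).1

end AlternatingCount

section Complementary

variable {κ : Type*}

/-- The sign of a label; a label consists of an index and a sign and is ordered by its index
first. -/
def labelSign (a : κ ×ₗ Bool) : Bool := (ofLex a).2

/-- The label with the same index and the opposite sign. -/
def flipSign (a : κ ×ₗ Bool) : κ ×ₗ Bool := toLex ((ofLex a).1, !(ofLex a).2)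

theorem labelSign_flipSign (a : κ ×ₗ Bool) : labelSign (flipSign a) = !labelSign a := rfl

theorem eq_or_eq_flipSign {a b : κ ×ₗ Bool} (h : (ofLex a).1 = (ofLex b).1) :
    b = a ∨ b = flipSign a := by
  rcases Bool.eq_or_eq_not (ofLex b).2 (ofLex a).2 with hsign | hsign
  · exact .inl (ofLex.injective (Prod.ext h.symm hsign))
  · exact .inr (ofLex.injective (Prod.ext h.symm hsign))

/-- The simplices without a pair of labels that have the same index and opposite signs. -/
def noncomplementary (κ : Type*) : Set (κ ×ₗ Bool →₀ ℕ) :=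
  {m | ∀ a ∈ m.support, ∀ b ∈ m.support, b ≠ flipSign a}

theorem noncomplementary_of_le {m m' : κ ×ₗ Bool →₀ ℕ} (h : m' ∈ noncomplementary κ)
    (hle : m ≤ m') : m ∈ noncomplementary κ :=
  fun a ha b hb => h a (Finsupp.support_mono hle ha) b (Finsupp.support_mono hle hb)

variable [LinearOrder κ]

theorem flipSign_le_flipSign {a b : κ ×ₗ Bool} (hab : a ≤ b) (h : b ≠ flipSign a) :
    flipSign a ≤ flipSign b := by
  rcases Prod.Lex.le_iff.1 hab with hlt | ⟨heq, -⟩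
  · exact Prod.Lex.le_iff.2 (.inl hlt)
  · rw [(eq_or_eq_flipSign heq).resolve_right h]

theorem altCount_monomial_mapDomain_flipSign (b : Bool) {m : κ ×ₗ Bool →₀ ℕ}
    (hm : m ∈ noncomplementary κ) :
    altCount labelSign b (monomial (m.mapDomain flipSign) 1) =
      altCount labelSign (!b) (monomial m 1) := by
  classical
  induction m using finsupp_induction_on_min generalizing b with
  | zero => rw [Finsupp.mapDomain_zero, ← one_def, altCount_one, altCount_one]
  | single_add a m ha ih =>
    have hflip : ∀ d ∈ (m.mapDomain flipSign).support, flipSign a ≤ d := by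
      intro d hd
      obtain ⟨c, hc, rfl⟩ := mem_image.1 (Finsupp.mapDomain_support hd)
      exact flipSign_le_flipSign (ha c hc)
        (hm a (mem_support_single_add a m) c (Finsupp.support_mono le_add_self hc))
    rw [Finsupp.mapDomain_add, Finsupp.mapDomain_single, altCount_monomial_single_add b hflip,
      altCount_monomial_single_add (!b) ha, ih _ (noncomplementary_of_le hm le_add_self),
      labelSign_flipSign]
    simp only [Bool.not_eq_eq_eq_not]

theorem altCount_rename_flipSign (b : Bool) {c : Chain (κ ×ₗ Bool)}
    (hc : c ∈ restrictSupport (ZMod 2) (noncomplementary κ)) :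
    altCount labelSign b (rename flipSign c) = altCount labelSign (!b) c := by
  rw [← sub_eq_zero]
  refine linearMap_mem_of_mem_restrictSupport (N := ⊥) (altCount labelSign b ∘ₗ
    (rename flipSign).toLinearMap - altCount labelSign (!b)) (fun m hm => ?_) hc
  simp [rename_monomial, altCount_monomial_mapDomain_flipSign b hm]

theorem degree_le_card_image_of_altCount_ne_zero {b : Bool} {m : κ ×ₗ Bool →₀ ℕ}
    (hm : m ∈ noncomplementary κ) (hb : altCount labelSign b (monomial m 1) ≠ 0) :
    m.degree ≤ #(m.support.image fun a => (ofLex a).1) := by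
  induction m using finsupp_induction_on_min generalizing b with
  | zero => simp
  | single_add a m ha ih =>
    rw [altCount_monomial_single_add b ha, ite_ne_right_iff] at hb
    have hle : m ≤ Finsupp.single a 1 + m := le_add_self
    have hnew : (ofLex a).1 ∉ m.support.image fun a => (ofLex a).1 := by
      intro hmem
      obtain ⟨c, hc, hca⟩ := mem_image.1 hmem
      obtain rfl := (eq_or_eq_flipSign hca.symm).resolve_right
        (hm a (mem_support_single_add a m) c (Finsupp.support_mono hle hc))
      exact Bool.eq_not_self b |>.1 (hb.1.symm.trans (sign_eq_of_altCount_ne_zero hc ha hb.2))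
    calc (Finsupp.single a 1 + m).degree
        = m.degree + 1 := by rw [map_add, Finsupp.degree_single, add_comm]
      _ ≤ #(m.support.image fun a => (ofLex a).1) + 1 := by
          gcongr
          exact ih (noncomplementary_of_le hm hle) hb.2
      _ = #(insert (ofLex a).1 (m.support.image fun a => (ofLex a).1)) :=
          (card_insert_of_notMem hnew).symm
      _ ≤ _ := card_le_card (insert_subset
          (mem_image_of_mem _ (mem_support_single_add a m))
          (image_subset_image (Finsupp.support_mono hle)))

theorem altCount_eq_zero_of_card_lt [Fintype κ] (b : Bool) {c : Chain (κ ×ₗ Bool)}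
    (hc : c ∈ restrictSupport (ZMod 2)
      (noncomplementary κ ∩ {m : κ ×ₗ Bool →₀ ℕ | Fintype.card κ < m.degree})) :
    altCount labelSign b c = 0 := by
  refine linearMap_mem_of_mem_restrictSupport (N := ⊥) _ (fun m hm => ?_) hc
  rw [Submodule.mem_bot]
  by_contra hne
  exact hm.2.not_ge ((degree_le_card_image_of_altCount_ne_zero hm.1 hne).trans (card_le_univ _))

end Complementary

section Sphere

variable {ι E : Type*}

/-- The fundamental cycle of the boundary of the cross-polytope with vertices `± e i`, `i ∈ s`. -/
def sphereChain [Neg E] (e : ι → E) (s : Finset ι) : Chain E := ∏ i ∈ s, (X (e i) + X (-e i))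

theorem boundary_sphereChain [Neg E] (e : ι → E) (s : Finset ι) :
    boundary (sphereChain e s) = 0 := by
  classical
  induction s using Finset.induction_on with
  | empty => simp [sphereChain]
  | insert i s hi ih =>
    rw [sphereChain] at ih
    rw [sphereChain, prod_insert hi, Derivation.leibniz, ih, map_add, boundary_X, boundary_X,
      CharTwo.add_self_eq_zero, smul_zero, smul_zero, add_zero]

theorem rename_neg_sphereChain [InvolutiveNeg E] (e : ι → E) (s : Finset ι) :
    rename Neg.neg (sphereChain e s) = sphereChain e s := by
  simp [sphereChain, map_prod, add_comm]

theorem sphereChain_insert [InvolutiveNeg E] [DecidableEq ι] (e : ι → E) {s : Finset ι} {i : ι}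
    (hi : i ∉ s) : sphereChain e (insert i s) =
      X (e i) * sphereChain e s + rename Neg.neg (X (e i) * sphereChain e s) := by
  rw [map_mul, rename_X, rename_neg_sphereChain, ← add_mul, sphereChain, prod_insert hi,
    sphereChain]

/-- The boundary of the cross-polytope with vertices `± e i`, as the union of its facets. -/
def crossPolytope [AddCommGroup E] [Module ℝ E] (e : ι → E) : Set E :=
  ⋃ σ : ι → ℤˣ, convexHull ℝ (Set.range fun i => σ i • e i)

/-- The simplices of degree `#s` contained in a facet of the cross-polytope, with vertices `± e i`
for `i ∈ s`. -/
def crossFaces [AddCommGroup E] (e : ι → E) (s : Finset ι) : Set (E →₀ ℕ) :=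
  {m | m.degree = #s ∧ ∃ σ : ι → ℤˣ, (m.support : Set E) ⊆ (fun i => σ i • e i) '' s}

theorem X_mul_mem_restrictSupport_crossFaces [AddCommGroup E] [DecidableEq ι] {e : ι → E}
    {s : Finset ι} {i : ι} (hi : i ∉ s) (τ : ℤˣ) {c : Chain E}
    (hc : c ∈ restrictSupport (ZMod 2) (crossFaces e s)) :
    X (τ • e i) * c ∈ restrictSupport (ZMod 2) (crossFaces e (insert i s)) := by
  classical
  refine X_mul_mem_restrictSupport ?_ hc
  rintro m ⟨hdeg, σ, hσ⟩
  refine ⟨by rw [map_add, Finsupp.degree_single, hdeg, card_insert_of_notMem hi, add_comm],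
    Function.update σ i τ, fun v hv => ?_⟩
  rcases mem_union.1 (Finsupp.support_add hv) with hv | hv
  · obtain rfl := mem_singleton.1 (Finsupp.support_single_subset hv)
    exact ⟨i, by simp, by simp⟩
  · obtain ⟨j, hj, rfl⟩ := hσ hv
    have hji : j ≠ i := by rintro rfl; exact hi hj
    exact ⟨j, mem_coe.2 (mem_insert_of_mem hj), by simp [hji]⟩

theorem sphereChain_mem_restrictSupport_crossFaces [AddCommGroup E] (e : ι → E) (s : Finset ι) :
    sphereChain e s ∈ restrictSupport (ZMod 2) (crossFaces e s) := by
  classical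
  induction s using Finset.induction_on with
  | empty =>
    rw [sphereChain, prod_empty, MvPolynomial.one_def]
    exact (monomial_mem_restrictSupport _).2 (.inl ⟨by simp, 1, by simp⟩)
  | insert i s hi ih =>
    rw [sphereChain_insert e hi, map_mul, rename_X, rename_neg_sphereChain]
    refine Submodule.add_mem _ ?_ ?_
    · simpa using X_mul_mem_restrictSupport_crossFaces hi 1 ih
    · simpa using X_mul_mem_restrictSupport_crossFaces hi (-1) ih

variable [AddCommGroup E] [Module ℝ E] {e : ι → E}

theorem neg_mem_crossPolytope {x : E} (hx : x ∈ crossPolytope e) : -x ∈ crossPolytope e := by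
  obtain ⟨σ, hσ⟩ := Set.mem_iUnion.1 hx
  refine Set.mem_iUnion.2 ⟨-σ, ?_⟩
  have hrange : (Set.range fun i => (-σ) i • e i) = -Set.range fun i => σ i • e i := by
    rw [← Set.image_neg_eq_neg, ← Set.range_comp]
    simp [Function.comp_def, Units.smul_def]
  rwa [hrange, convexHull_neg, Set.neg_mem_neg]

theorem crossPolytope_nonempty [Nonempty ι] : (crossPolytope e).Nonempty :=
  ⟨_, Set.mem_iUnion.2 ⟨1, subset_convexHull ℝ _ (Set.mem_range_self (Classical.arbitrary ι))⟩⟩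

theorem zero_notMem_crossPolytope (he : LinearIndependent ℝ e) : (0 : E) ∉ crossPolytope e := by
  intro h
  obtain ⟨σ, hσ⟩ := Set.mem_iUnion.1 h
  obtain ⟨ℓ, hℓ⟩ : ∃ ℓ : E →ₗ[ℝ] ℝ, ∀ i, ℓ (e i) = (σ i : ℤ) := by
    obtain ⟨ℓ, hℓ⟩ := LinearMap.exists_extend
      ((Module.Basis.span he).constr ℝ fun i => ((σ i : ℤ) : ℝ))
    refine ⟨ℓ, fun i => ?_⟩
    have hi := LinearMap.congr_fun hℓ (Module.Basis.span he i)
    rwa [LinearMap.comp_apply, Submodule.subtype_apply, Module.Basis.constr_basis,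
      Module.Basis.span_apply] at hi
  have hone : convexHull ℝ (Set.range fun i => σ i • e i) ⊆ {x | ℓ x = 1} := by
    refine convexHull_min ?_ (convex_hyperplane ℓ.isLinear 1)
    rintro _ ⟨i, rfl⟩
    rcases Int.units_eq_one_or (σ i) with h | h <;> simp [h, hℓ, Units.smul_def]
  simpa using hone hσ

end Sphere

section SmallSimplices

variable {ι E : Type*} [NormedAddCommGroup E] [NormedSpace ℝ E] {e : ι → E}

theorem isCompact_crossPolytope [Finite ι] : IsCompact (crossPolytope e) :=
  isCompact_iUnion fun _ => (Set.finite_range _).isCompact_convexHull ℝ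

theorem crossFaces_subset_smallSimplices [Finite ι] (s : Finset ι) :
    crossFaces e s ⊆ smallSimplices #s (crossPolytope e) (diam (crossPolytope e)) := by
  rintro m ⟨hdeg, σ, hσ⟩
  have hsub : convexHull ℝ (m.support : Set E) ⊆ crossPolytope e :=
    (convexHull_mono (hσ.trans (Set.image_subset_range _ _))).trans
      (Set.subset_iUnion (fun σ : ι → ℤˣ => convexHull ℝ (Set.range fun i => σ i • e i)) σ)
  have hmem : ∀ v ∈ m.support, v ∈ crossPolytope e := fun v hv => hsub (subset_convexHull ℝ _ hv)
  exact ⟨hdeg, hsub, fun v hv w hw =>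
    dist_le_diam_of_mem isCompact_crossPolytope.isBounded (hmem v hv) (hmem w hw)⟩

theorem exists_iterate_subdivision_crossFaces_mem [Finite ι] {δ : ℝ} (hδ : 0 < δ) :
    ∃ i : ℕ, ∀ (s : Finset ι), ∀ c ∈ restrictSupport (ZMod 2) (crossFaces e s),
      (subdivision #s)^[i] c ∈
        restrictSupport (ZMod 2) (smallSimplices #s (crossPolytope e) δ) := by
  cases nonempty_fintype ι
  obtain ⟨i, hi⟩ : ∃ i : ℕ, ((Fintype.card ι : ℝ) / (Fintype.card ι + 1)) ^ i *
      diam (crossPolytope e) < δ := by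
    have hlt : (Fintype.card ι : ℝ) / (Fintype.card ι + 1) < 1 :=
      (div_lt_one (by positivity)).2 (lt_add_one _)
    have htendsto := (tendsto_pow_atTop_nhds_zero_of_lt_one (by positivity) hlt).mul_const
      (diam (crossPolytope e))
    rw [zero_mul] at htendsto
    exact (htendsto.eventually_lt_const hδ).exists
  refine ⟨i, fun s c hc => ?_⟩
  refine restrictSupport_mono _ ?_ (subdivision_iterate_mem
    ((card_le_univ s).trans (Nat.le_succ _))
    (restrictSupport_mono _ (crossFaces_subset_smallSimplices s) hc) i)
  exact fun m hm => ⟨hm.1, hm.2.1, fun v hv w hw => (hm.2.2 v hv w hw).trans hi.le⟩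

end SmallSimplices

section Tucker

variable {κ E : Type*}

/-- The simplices on which a labelling of the vertices is antipodal and has no complementary
edge. -/
def tuckerSimplices [Neg E] (lab : E → κ ×ₗ Bool) : Set (E →₀ ℕ) :=
  {m | (∀ v ∈ m.support, lab (-v) = flipSign (lab v)) ∧
    ∀ v ∈ m.support, ∀ w ∈ m.support, lab w ≠ flipSign (lab v)}

theorem mapDomain_mem_noncomplementary [Neg E] {lab : E → κ ×ₗ Bool} {m : E →₀ ℕ}
    (hm : m ∈ tuckerSimplices lab) : m.mapDomain lab ∈ noncomplementary κ := by
  classical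
  intro a ha b hb
  obtain ⟨v, hv, rfl⟩ := mem_image.1 (Finsupp.mapDomain_support ha)
  obtain ⟨w, hw, rfl⟩ := mem_image.1 (Finsupp.mapDomain_support hb)
  exact hm.2 v hv w hw

theorem rename_neg_rename_of_mem_tuckerSimplices [Neg E] {lab : E → κ ×ₗ Bool} {c : Chain E}
    (hc : c ∈ restrictSupport (ZMod 2) (tuckerSimplices lab)) :
    rename lab (rename Neg.neg c) = rename flipSign (rename lab c) := by
  rw [← sub_eq_zero]
  refine linearMap_mem_of_mem_restrictSupport (N := ⊥)
    ((rename lab).toLinearMap ∘ₗ (rename (R := ZMod 2) Neg.neg).toLinearMap -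
      (rename flipSign).toLinearMap ∘ₗ (rename lab).toLinearMap) (fun m hm => ?_) hc
  have hmap : m.mapDomain (lab ∘ Neg.neg) = m.mapDomain (flipSign ∘ lab) :=
    Finsupp.mapDomain_congr hm.1
  simp [rename_monomial, ← Finsupp.mapDomain_comp, hmap]

theorem smallSimplices_subset_tuckerSimplices [NormedAddCommGroup E] [NormedSpace ℝ E]
    {lab : E → κ ×ₗ Bool} {K : Set E} {δ : ℝ}
    (hanti : ∀ x ∈ K, lab (-x) = flipSign (lab x))
    (hcomp : ∀ x ∈ K, ∀ y ∈ K, dist x y ≤ δ → lab y ≠ flipSign (lab x)) (k : ℕ) :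
    smallSimplices k K δ ⊆ tuckerSimplices lab := by
  rintro m ⟨-, hsub, hdist⟩
  have hmem : ∀ v ∈ m.support, v ∈ K := fun v hv => hsub (subset_convexHull ℝ _ hv)
  exact ⟨fun v hv => hanti v (hmem v hv), fun v hv w hw =>
    hcomp v (hmem v hv) w (hmem w hw) (hdist v hv w hw)⟩

variable [LinearOrder κ]

theorem altCount_rename_boundary [Neg E] {lab : E → κ ×ₗ Bool} (b : Bool) {c : Chain E}
    (hc : c ∈ restrictSupport (ZMod 2) (tuckerSimplices lab)) :
    altCount labelSign b (rename lab (boundary c)) =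
      altCount labelSign b (rename lab (c + rename Neg.neg c)) := by
  have hlab : rename lab c ∈ restrictSupport (ZMod 2) (noncomplementary κ) := by
    refine linearMap_mem_of_mem_restrictSupport (rename lab).toLinearMap (fun m hm => ?_) hc
    rw [AlgHom.toLinearMap_apply, rename_monomial, monomial_mem_restrictSupport]
    exact .inl (mapDomain_mem_noncomplementary hm)
  rw [← boundary_rename, altCount_boundary, map_add, map_add,
    rename_neg_rename_of_mem_tuckerSimplices hc, altCount_rename_flipSign _ hlab]

variable {ι : Type*} {lab : E → κ ×ₗ Bool}

/-- Ky Fan's parity argument: the sphere is a hemisphere plus its antipode, so its alternating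
count is that of the boundary of the hemisphere, a sphere of one dimension less. -/
theorem altCount_subdivision_sphereChain [AddCommGroup E] [Module ℝ E] {e : ι → E} {i : ℕ}
    (h : ∀ (t : Finset ι) (j : ι), j ∉ t → (subdivision (#t + 1))^[i] (X (e j) * sphereChain e t) ∈
      restrictSupport (ZMod 2) (tuckerSimplices lab)) (b : Bool) (s : Finset ι) :
    altCount labelSign b (rename lab ((subdivision #s)^[i] (sphereChain e s))) = 1 := by
  classical
  induction s using Finset.induction_on with
  | empty =>
    have hid : (subdivision 0 : Chain E →ₗ[ZMod 2] Chain E) = LinearMap.id := rfl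
    simp [sphereChain, hid, altCount_one]
  | insert j s hj ih =>
    have hneg : ∀ c : Chain E, (subdivision (#s + 1))^[i] (rename Neg.neg c) =
        rename Neg.neg ((subdivision (#s + 1))^[i] c) := fun c =>
      (rename_subdivision_iterate (LinearEquiv.neg ℝ : E ≃ₗ[ℝ] E).toLinearMap _ i c).symm
    rw [sphereChain_insert e hj, card_insert_of_notMem hj, iterate_map_add, hneg,
      ← altCount_rename_boundary b (h s j hj), boundary_subdivision_iterate, boundary_X_mul,
      boundary_sphereChain, mul_zero, add_zero, ih]

/-- Tucker's lemma, in the metric form that refers to no particular triangulation. -/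
theorem exists_dist_le_and_eq_flipSign [Fintype κ] [Fintype ι] [NormedAddCommGroup E]
    [NormedSpace ℝ E] {e : ι → E} (hcard : Fintype.card κ < Fintype.card ι)
    (hanti : ∀ x ∈ crossPolytope e, lab (-x) = flipSign (lab x)) {δ : ℝ} (hδ : 0 < δ) :
    ∃ x ∈ crossPolytope e, ∃ y ∈ crossPolytope e, dist x y ≤ δ ∧ lab y = flipSign (lab x) := by
  classical
  by_contra! hcomp
  obtain ⟨i, hi⟩ := exists_iterate_subdivision_crossFaces_mem (e := e) hδ
  have htucker := smallSimplices_subset_tuckerSimplices hanti hcomp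
  have hone := altCount_subdivision_sphereChain (lab := lab) (e := e) (i := i)
    (fun t j hj => ?_) true univ
  · refine one_ne_zero (hone.symm.trans (altCount_eq_zero_of_card_lt true ?_))
    refine linearMap_mem_of_mem_restrictSupport (rename lab).toLinearMap (fun m hm => ?_)
      (hi univ _ (sphereChain_mem_restrictSupport_crossFaces e univ))
    rw [AlgHom.toLinearMap_apply, rename_monomial, monomial_mem_restrictSupport]
    refine .inl ⟨mapDomain_mem_noncomplementary (htucker _ hm), ?_⟩
    simpa [Finsupp.degree_mapDomain, hm.1] using hcard
  · have hhemi := X_mul_mem_restrictSupport_crossFaces hj 1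
      (sphereChain_mem_restrictSupport_crossFaces e t)
    rw [one_smul] at hhemi
    rw [← card_insert_of_notMem hj]
    exact restrictSupport_mono _ (htucker _) (hi _ _ hhemi)

end Tucker

section BorsukUlam

variable {ι E : Type*} [NormedAddCommGroup E] [NormedSpace ℝ E]

/-- The index of a coordinate of largest absolute value, with the sign of that coordinate. The
index depends only on the absolute values, so that opposite vectors get opposite labels. -/
def maxLabel {κ : Type*} [Finite κ] [Nonempty κ] (y : κ → ℝ) : κ ×ₗ Bool :=
  toLex ((Finite.exists_max |y|).choose, decide (0 < y (Finite.exists_max |y|).choose))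

theorem norm_le_abs_maxLabel {κ : Type*} [Fintype κ] [Nonempty κ] (y : κ → ℝ) :
    ‖y‖ ≤ |y (ofLex (maxLabel y)).1| :=
  (pi_norm_le_iff_of_nonneg (abs_nonneg _)).2 (Finite.exists_max |y|).choose_spec

theorem labelSign_maxLabel {κ : Type*} [Finite κ] [Nonempty κ] (y : κ → ℝ) :
    labelSign (maxLabel y) = decide (0 < y (ofLex (maxLabel y)).1) := rfl

theorem maxLabel_neg {κ : Type*} [Finite κ] [Nonempty κ] {y : κ → ℝ} (hy : y ≠ 0) :
    maxLabel (-y) = flipSign (maxLabel y) := by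
  cases nonempty_fintype κ
  have hne : y (ofLex (maxLabel y)).1 ≠ 0 :=
    abs_pos.1 ((norm_pos_iff.2 hy).trans_le (norm_le_abs_maxLabel y))
  have hsign : decide (0 < -y (ofLex (maxLabel y)).1) = !decide (0 < y (ofLex (maxLabel y)).1) := by
    rw [← decide_not, decide_eq_decide, neg_pos, not_lt, hne.le_iff_lt]
  simp only [maxLabel, abs_neg]
  exact congrArg (fun b => toLex ((ofLex (maxLabel y)).1, b)) hsign

theorem norm_le_dist_of_maxLabel_eq_flipSign {κ : Type*} [Fintype κ] [Nonempty κ] {y z : κ → ℝ}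
    (h : maxLabel z = flipSign (maxLabel y)) : ‖y‖ ≤ dist y z := by
  have hindex : (ofLex (maxLabel z)).1 = (ofLex (maxLabel y)).1 := by rw [h]; rfl
  have hsign : decide (0 < z (ofLex (maxLabel y)).1) = !decide (0 < y (ofLex (maxLabel y)).1) := by
    have hflip := congrArg labelSign h
    rwa [labelSign_flipSign, labelSign_maxLabel, labelSign_maxLabel, hindex] at hflip
  refine (norm_le_abs_maxLabel y).trans (le_trans ?_ (dist_le_pi_dist y z (ofLex (maxLabel y)).1))
  rw [← decide_not, decide_eq_decide, not_lt] at hsign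
  rw [Real.dist_eq]
  by_cases hy : 0 < y (ofLex (maxLabel y)).1
  · rw [abs_of_pos hy]
    exact le_abs.2 (.inl (by linarith [not_lt.1 (mt hsign.1 hy.not_ge)]))
  · rw [abs_of_nonpos (not_lt.1 hy)]
    exact le_abs.2 (.inr (by linarith [hsign.2 (not_lt.1 hy)]))

theorem exists_eq_zero_of_odd_on_crossPolytope [Fintype ι] {n : ℕ} (hn : n < Fintype.card ι)
    {e : ι → E} {F : E → Fin n → ℝ} (hF : ContinuousOn F (crossPolytope e))
    (hodd : ∀ x ∈ crossPolytope e, F (-x) = -F x) : ∃ x ∈ crossPolytope e, F x = 0 := by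
  by_contra! hne
  have hnonempty : Nonempty ι := Fintype.card_pos_iff.1 (by omega)
  obtain ⟨x₀, hx₀, hmin⟩ := isCompact_crossPolytope.exists_isMinOn
    crossPolytope_nonempty hF.norm
  obtain ⟨i₀, -⟩ : ∃ i, F x₀ i ≠ 0 := Function.ne_iff.1 (hne x₀ hx₀)
  have : Nonempty (Fin n) := ⟨i₀⟩
  obtain ⟨δ, hδ, hunif⟩ := uniformContinuousOn_iff_le.1
    (isCompact_crossPolytope.uniformContinuousOn_of_continuous hF) (‖F x₀‖ / 2)
    (half_pos (norm_pos_iff.2 (hne x₀ hx₀)))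
  obtain ⟨x, hx, y, hy, hdist, hlab⟩ := exists_dist_le_and_eq_flipSign (e := e)
    (lab := fun x => maxLabel (F x)) (by rwa [Fintype.card_fin])
    (fun x hx => by rw [hodd x hx, maxLabel_neg (hne x hx)]) hδ
  have hpos := norm_pos_iff.2 (hne x₀ hx₀)
  linarith [hunif x hx y hy hdist, norm_le_dist_of_maxLabel_eq_flipSign hlab,
    isMinOn_iff.1 hmin x hx]

theorem exists_eq_zero_of_odd_on_sphere {n : ℕ} (hn : n < Module.finrank ℝ E) {F : E → Fin n → ℝ}
    (hF : ContinuousOn F (sphere 0 1)) (hodd : ∀ x ∈ sphere (0 : E) 1, F (-x) = -F x) :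
    ∃ x ∈ sphere (0 : E) 1, F x = 0 := by
  obtain ⟨e, he⟩ := exists_linearIndependent_of_le_finrank (Nat.succ_le_of_lt hn)
  have hne : ∀ x ∈ crossPolytope e, x ≠ 0 := fun x hx =>
    ne_of_mem_of_not_mem hx (zero_notMem_crossPolytope he)
  have hsphere : Set.MapsTo (fun x : E => ‖x‖⁻¹ • x) (crossPolytope e) (sphere 0 1) :=
    fun x hx => by simpa using norm_smul_inv_norm (𝕜 := ℝ) (hne x hx)
  obtain ⟨x, hx, hFx⟩ := exists_eq_zero_of_odd_on_crossPolytope (by simp) (e := e)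
    (F := fun x => F (‖x‖⁻¹ • x))
    (hF.comp ((continuousOn_id.norm.inv₀ fun x hx => norm_ne_zero_iff.2 (hne x hx)).smul
      continuousOn_id) hsphere)
    (fun x hx => by rw [norm_neg, smul_neg, hodd _ (hsphere hx)])
  exact ⟨_, hsphere hx, hFx⟩

theorem borsuk_ulam {F : Type*} [NormedAddCommGroup F] [NormedSpace ℝ F] [FiniteDimensional ℝ F]
    (hdim : Module.finrank ℝ F < Module.finrank ℝ E) {g : sphere (0 : E) 1 → F}
    (hg : Continuous g) (hodd : ∀ x, g (-x) = -g x) : ∃ x, g x = 0 := by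
  let coords := ContinuousLinearEquiv.ofFinrankEq
    (Module.finrank_fin_fun ℝ (n := Module.finrank ℝ F)).symm
  let G : E → Fin (Module.finrank ℝ F) → ℝ := Function.extend Subtype.val (coords ∘ g) 0
  have hG (x : sphere (0 : E) 1) : G x = coords (g x) := Subtype.val_injective.extend_apply _ _ x
  obtain ⟨x, hx, hzero⟩ := exists_eq_zero_of_odd_on_sphere hdim (F := G)
    (continuousOn_iff_continuous_domRestrict.2
      ((coords.continuous.comp hg).congr fun x => (hG x).symm))
    fun x hx => by
      rw [hG ⟨x, hx⟩, ← map_neg, ← hodd]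
      exact hG (-⟨x, hx⟩)
  exact ⟨⟨x, hx⟩, by simpa using (hG ⟨x, hx⟩).symm.trans hzero⟩

end BorsukUlam

end Topology

section ArctanVariation

open Polynomial

theorem continuous_im_inv_ofReal_sub (z : ℂ) : Continuous fun t : ℝ => ((t - z : ℂ)⁻¹).im := by
  by_cases hz : z.im = 0
  · simpa [Complex.inv_im, hz] using continuous_const
  · refine Complex.continuous_im.comp (Continuous.inv₀ (by fun_prop) fun t h => hz ?_)
    simpa using congrArg Complex.im h

theorem hasDerivAt_arctan_sub_re_div_im {z : ℂ} (hz : z.im ≠ 0) (t : ℝ) :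
    HasDerivAt (fun t => Real.arctan ((t - z.re) / z.im)) ((t - z : ℂ)⁻¹).im t := by
  refine (((hasDerivAt_id t).sub_const z.re).div_const z.im).arctan.congr_deriv ?_
  have hne : (t - z.re) ^ 2 + z.im ^ 2 ≠ 0 := by positivity
  simp only [id, Complex.inv_im, Complex.normSq_apply, Complex.sub_re, Complex.sub_im,
    Complex.ofReal_re, Complex.ofReal_im, ← sq]
  field_simp [hne]
  ring

theorem integral_im_inv_ofReal_sub_lt_pi {z : ℂ} (hz : z.im ≠ 0) (a b : ℝ) :
    ∫ t in a..b, ((t - z : ℂ)⁻¹).im < π := by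
  rw [intervalIntegral.integral_eq_sub_of_hasDerivAt
    (fun t _ => hasDerivAt_arctan_sub_re_div_im hz t)
    ((continuous_im_inv_ofReal_sub z).intervalIntegrable _ _)]
  linarith [Real.arctan_lt_pi_div_two ((b - z.re) / z.im),
    Real.neg_pi_div_two_lt_arctan ((a - z.re) / z.im)]

theorem abs_im_inv_ofReal_sub_of_im_nonneg {z : ℂ} (hz : 0 ≤ z.im) (t : ℝ) :
    |((t - z : ℂ)⁻¹).im| = ((t - z : ℂ)⁻¹).im := by
  refine abs_of_nonneg ?_
  rw [Complex.inv_im]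
  simpa using div_nonneg hz (Complex.normSq_nonneg _)

theorem abs_im_inv_ofReal_sub_conj (z : ℂ) (t : ℝ) :
    |((t - starRingEnd ℂ z : ℂ)⁻¹).im| = |((t - z : ℂ)⁻¹).im| := by
  rw [← Complex.conj_ofReal, ← map_sub, ← map_inv₀, Complex.conj_im, abs_neg, Complex.conj_ofReal]

theorem integral_abs_im_inv_ofReal_sub_le_pi (z : ℂ) (a b : ℝ) :
    ∫ t in a..b, |((t - z : ℂ)⁻¹).im| ≤ π := by
  wlog hz : 0 ≤ z.im generalizing z
  · simpa only [abs_im_inv_ofReal_sub_conj] using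
      this (starRingEnd ℂ z) (by simpa using (not_le.1 hz).le)
  rcases hz.eq_or_lt with hz | hz
  · simp [Complex.inv_im, ← hz, Real.pi_nonneg]
  · simpa only [abs_im_inv_ofReal_sub_of_im_nonneg hz.le] using
      (integral_im_inv_ofReal_sub_lt_pi hz.ne' a b).le

theorem integral_abs_im_sum_inv_ofReal_sub_le {a b : ℝ} (hab : a ≤ b) (s : Multiset ℂ) :
    ∫ t in a..b, |((s.map fun z => (t - z : ℂ)⁻¹).sum).im| ≤ s.card * π := by
  have hcont (s : Multiset ℂ) :
      Continuous fun t : ℝ => |((s.map fun z => (t - z : ℂ)⁻¹).sum).im| := by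
    simp_rw [← Complex.coe_imAddGroupHom, map_multiset_sum, Multiset.map_map]
    exact (continuous_multiset_sum s fun z _ => continuous_im_inv_ofReal_sub z).abs
  induction s using Multiset.induction with
  | empty => simp
  | cons z s ih =>
    simp only [Multiset.map_cons, Multiset.sum_cons, Multiset.card_cons, Complex.add_im]
    calc _ ≤ ∫ t in a..b, |((t - z : ℂ)⁻¹).im| + |((s.map fun z => (t - z : ℂ)⁻¹).sum).im| :=
          intervalIntegral.integral_mono hab
            (by simpa using (hcont (z ::ₘ s)).intervalIntegrable a b)
            (((continuous_im_inv_ofReal_sub z).abs.add (hcont s)).intervalIntegrable a b)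
            fun t => abs_add_le _ _
      _ ≤ (s.card + 1 : ℕ) * π := by
          rw [intervalIntegral.integral_add
            ((continuous_im_inv_ofReal_sub z).abs.intervalIntegrable a b)
            ((hcont s).intervalIntegrable a b)]
          push_cast
          linarith [integral_abs_im_inv_ofReal_sub_le_pi z a b]

theorem natDegree_one_add_I_mul_map_le (q : ℝ[X]) :
    (1 + C Complex.I * q.map Complex.ofRealHom).natDegree ≤ q.natDegree :=
  (natDegree_add_le _ _).trans <| max_le (by simp) <|
    (natDegree_C_mul_le _ _).trans natDegree_map_le

/-- `1 + i q = |1 + i q| exp (i arctan q)`, so differentiating the logarithm splits the derivative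
of `arctan ∘ q` into one term for each complex root of `1 + i q`. -/
theorem deriv_arctan_eval (q : ℝ[X]) (t : ℝ) :
    deriv (fun t => Real.arctan (q.eval t)) t =
      (((1 + C Complex.I * q.map Complex.ofRealHom).roots.map fun z => (t - z : ℂ)⁻¹).sum).im := by
  have hmap (p : ℝ[X]) : (p.map Complex.ofRealHom).eval (t : ℂ) = p.eval t :=
    eval_map_apply (f := Complex.ofRealHom) t
  have heval : (1 + C Complex.I * q.map Complex.ofRealHom).eval (t : ℂ) =
      1 + Complex.I * q.eval t := by simp [hmap]
  have hderiv : (1 + C Complex.I * q.map Complex.ofRealHom).derivative.eval (t : ℂ) =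
      Complex.I * q.derivative.eval t := by simp [derivative_map, hmap]
  have hne : (1 + Complex.I * q.eval t : ℂ) ≠ 0 := fun h => by simpa using congrArg Complex.re h
  have hlog := (IsAlgClosed.splits (1 + C Complex.I * q.map Complex.ofRealHom))
    |>.eval_derivative_div_eval_of_ne_zero (heval ▸ hne)
  simp only [one_div] at hlog
  rw [← hlog, heval, hderiv, (q.hasDerivAt t).arctan.deriv]
  simp only [one_div, Complex.div_im, Complex.mul_im, Complex.I_re, Complex.ofReal_im, mul_zero,
    Complex.I_im, Complex.ofReal_re, one_mul, zero_add, Complex.add_re, Complex.one_re,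
    Complex.mul_re, zero_mul, sub_self, add_zero, mul_one, Complex.normSq_apply, Complex.add_im,
    Complex.one_im, zero_div, sub_zero]
  ring

theorem integral_abs_deriv_arctan_eval_le {a b : ℝ} (hab : a ≤ b) (q : ℝ[X]) :
    ∫ t in a..b, |deriv (fun t => Real.arctan (q.eval t)) t| ≤ q.natDegree * π := by
  simp only [deriv_arctan_eval]
  refine (integral_abs_im_sum_inv_ofReal_sub_le hab _).trans ?_
  gcongr
  exact (card_roots' _).trans (natDegree_one_add_I_mul_map_le q)

end ArctanVariation

section Approximation

theorem continuous_fixedPoint {X S : Type*} [TopologicalSpace X] [MetricSpace S] [CompleteSpace S]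
    [Nonempty S] {Φ : X → S → S} {k : NNReal} (hΦ : ∀ x, ContractingWith k (Φ x))
    (hcont : ∀ c, Continuous fun x => Φ x c) :
    Continuous fun x => ContractingWith.fixedPoint (Φ x) (hΦ x) := by
  refine continuous_iff_continuousAt.2 fun x₀ => tendsto_iff_dist_tendsto_zero.2 ?_
  set c₀ := ContractingWith.fixedPoint (Φ x₀) (hΦ x₀)
  have hfix : Φ x₀ c₀ = c₀ := (hΦ x₀).fixedPoint_isFixedPt
  have hlim : Filter.Tendsto (fun x => dist c₀ (Φ x c₀) / (1 - k)) (nhds x₀) (nhds 0) := by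
    have hat := ((continuous_const (y := c₀)).dist (hcont c₀)).div_const (1 - k : ℝ)
    simpa [hfix] using hat.tendsto x₀
  refine squeeze_zero (fun _ => dist_nonneg) (fun x => ?_) hlim
  rw [dist_comm]
  exact (hΦ x).dist_fixedPoint_le c₀

theorem exists_norm_apply_le_mul_norm {V X : Type*} [NormedAddCommGroup V] [NormedSpace ℝ V]
    [FiniteDimensional ℝ V] [TopologicalSpace X] {K : Set X} (hK : IsCompact K)
    (L : V →ₗ[ℝ] X → ℝ) (hL : ∀ c, ContinuousOn (L c) K) :
    ∃ B, 0 < B ∧ ∀ c, ∀ t ∈ K, |L c t| ≤ B * ‖c‖ := by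
  have := isCompact_iff_compactSpace.1 hK
  let restriction : V →ₗ[ℝ] C(K, ℝ) :=
    { toFun c := ⟨fun t => L c t, (hL c).domRestrict⟩
      map_add' c d := ContinuousMap.ext fun t => congrFun (map_add L c d) t
      map_smul' r c := ContinuousMap.ext fun t => congrFun (map_smul L r c) t }
  obtain ⟨B, hB, hbound⟩ := restriction.toContinuousLinearMap.isBoundedLinearMap.bound
  exact ⟨B, hB, fun c t ht => ((restriction c).norm_coe_le_norm ⟨t, ht⟩).trans (hbound c)⟩

variable {X α E : Type*} [TopologicalSpace X] [FirstCountableTopology X]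
  [MeasurableSpace α] {ν : Measure α} [NormedAddCommGroup E] [NormedSpace ℝ E]

theorem continuous_integral_smul_of_abs_le_one {f : α → E} (hf : Integrable f ν) {u : X → α → ℝ}
    (hu : ∀ x, AEStronglyMeasurable (u x) ν) (hbound : ∀ x t, |u x t| ≤ 1)
    (hcont : ∀ t, Continuous fun x => u x t) : Continuous fun x => ∫ t, u x t • f t ∂ν :=
  continuous_of_dominated (bound := fun t => ‖f t‖) (fun x => (hu x).smul hf.aestronglyMeasurable)
    (fun x => ae_of_all _ fun t => by
      rw [norm_smul]
      exact mul_le_of_le_one_left (norm_nonneg _) (hbound x t))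
    hf.norm (ae_of_all _ fun t => (hcont t).smul continuous_const)

theorem antitone_cos_arctan_natCast_mul (y : ℝ) :
    Antitone fun m : ℕ => Real.cos (Real.arctan (m * y)) := fun k m hkm => by
  simp only [Real.cos_arctan, mul_pow]
  gcongr

theorem tendsto_cos_arctan_natCast_mul {y : ℝ} (hy : y ≠ 0) :
    Filter.Tendsto (fun m : ℕ => Real.cos (Real.arctan (m * y))) Filter.atTop (nhds 0) := by
  simp only [Real.cos_arctan, one_div]
  refine Filter.Tendsto.inv_tendsto_atTop (Filter.tendsto_atTop_mono (fun m => ?_)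
    (tendsto_natCast_atTop_atTop.atTop_mul_const (abs_pos.2 hy)))
  refine Real.le_sqrt_of_sq_le ?_
  rw [mul_pow, mul_pow, sq_abs]
  linarith

theorem exists_forall_integral_cos_arctan_mul_le [CompactSpace X] {G : α → ℝ}
    (hG : Integrable G ν) (hG₀ : 0 ≤ G) {u : X → α → ℝ}
    (hu : ∀ x, AEStronglyMeasurable (u x) ν) (hcont : ∀ t, Continuous fun x => u x t)
    (hne : ∀ x, ∀ᵐ t ∂ν, u x t ≠ 0) {δ : ℝ} (hδ : 0 < δ) :
    ∃ m : ℕ, ∀ x, ∫ t, Real.cos (Real.arctan (m * u x t)) * G t ∂ν ≤ δ := by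
  let J (m : ℕ) (x : X) : ℝ := ∫ t, Real.cos (Real.arctan (m * u x t)) * G t ∂ν
  have hmeas (m : ℕ) (x : X) :
      AEStronglyMeasurable (fun t => Real.cos (Real.arctan (m * u x t))) ν :=
    (Real.continuous_cos.comp Real.continuous_arctan).comp_aestronglyMeasurable
      ((hu x).const_mul (m : ℝ))
  have hbound (m : ℕ) (x : X) (t : α) : ‖Real.cos (Real.arctan (m * u x t))‖ ≤ 1 :=
    Real.abs_cos_le_one _
  have hJcont (m : ℕ) : Continuous (J m) :=
    continuous_integral_smul_of_abs_le_one hG (hmeas m) (hbound m) fun t =>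
      Real.continuous_cos.comp (Real.continuous_arctan.comp ((hcont t).const_mul _))
  have hJanti : Antitone J := fun k m hkm x =>
    integral_mono (hG.bdd_mul (hmeas m x) (ae_of_all _ (hbound m x)))
      (hG.bdd_mul (hmeas k x) (ae_of_all _ (hbound k x))) fun t =>
      mul_le_mul_of_nonneg_right (antitone_cos_arctan_natCast_mul (u x t) hkm) (hG₀ t)
  have hJlim (x : X) : Filter.Tendsto (J · x) Filter.atTop (nhds 0) := by
    rw [← integral_zero α ℝ (μ := ν)]
    refine tendsto_integral_of_dominated_convergence (fun t => ‖G t‖)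
      (fun m => (hmeas m x).mul hG.aestronglyMeasurable) hG.norm
      (fun m => ae_of_all _ fun t => ?_) ?_
    · rw [norm_mul]
      exact mul_le_of_le_one_left (norm_nonneg _) (hbound m x t)
    · filter_upwards [hne x] with t ht
      simpa using (tendsto_cos_arctan_natCast_mul ht).mul_const (G t)
  have hunif := Antitone.tendstoUniformly_of_forall_tendsto hJcont hJanti continuous_const hJlim
  obtain ⟨m, hm⟩ := (Metric.tendstoUniformly_iff.1 hunif δ hδ).exists
  refine ⟨m, fun x => (le_abs_self _).trans (le_of_lt ?_)⟩
  simpa using hm x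

end Approximation

section Correction

open Set (Icc)

/-- The real vector space of smooth functions on the line. -/
def smoothFunctions : Submodule ℝ (ℝ → ℝ) where
  carrier := {g | ContDiff ℝ ∞ g}
  add_mem' hg₁ hg₂ := Set.mem_ofPred.2 ((Set.mem_ofPred.1 hg₁).add (Set.mem_ofPred.1 hg₂))
  zero_mem' := Set.mem_ofPred.2 contDiff_const
  smul_mem' r _ hg := Set.mem_ofPred.2 ((Set.mem_ofPred.1 hg).const_smul r)

theorem mem_smoothFunctions {g : ℝ → ℝ} : g ∈ smoothFunctions ↔ ContDiff ℝ ∞ g :=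
  Set.mem_ofPred

theorem contDiff_coe (g : smoothFunctions) : ContDiff ℝ ∞ g.1 :=
  mem_smoothFunctions.1 g.2

/-- A perturbation of the phase `φ` that moves `cos φ` by approximately `-w (sin φ)²`, hence by
approximately `-w` wherever `cos φ` is small. Since `w` is multiplied by the odd function `sin`,
the perturbed phase is odd in `φ`. -/
def correctedPhase (φ w : smoothFunctions) : smoothFunctions :=
  ⟨fun t => φ.1 t + w.1 t * Real.sin (φ.1 t),
    mem_smoothFunctions.2
      ((contDiff_coe φ).add ((contDiff_coe w).mul (contDiff_coe φ).sin))⟩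

/-- The cosine of a smooth phase. -/
def cosPhase (ψ : smoothFunctions) : smoothFunctions :=
  ⟨fun t => Real.cos (ψ.1 t), mem_smoothFunctions.2 (contDiff_coe ψ).cos⟩

/-- The sine of a smooth phase. -/
def sinPhase (ψ : smoothFunctions) : smoothFunctions :=
  ⟨fun t => Real.sin (ψ.1 t), mem_smoothFunctions.2 (contDiff_coe ψ).sin⟩

theorem correctedPhase_neg (φ w : smoothFunctions) :
    correctedPhase (-φ) w = -correctedPhase φ w := by
  ext t
  simp [correctedPhase, add_comm]

theorem correctedPhase_zero (φ : smoothFunctions) : correctedPhase φ 0 = φ := by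
  ext t
  simp [correctedPhase]

theorem cosPhase_neg (ψ : smoothFunctions) : cosPhase (-ψ) = cosPhase ψ := by
  ext t
  simp [cosPhase]

theorem sinPhase_neg (ψ : smoothFunctions) : sinPhase (-ψ) = -sinPhase ψ := by
  ext t
  simp [sinPhase]

theorem abs_one_sub_sin_mul_sin_add_le {φ ρ u : ℝ} (hφ : 0 ≤ Real.cos φ) (hu : |u| ≤ ρ) :
    |1 - Real.sin φ * Real.sin (φ + u * Real.sin φ)| ≤ Real.cos φ + ρ := by
  have hsplit : 1 - Real.sin φ * Real.sin (φ + u * Real.sin φ) =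
      Real.cos φ ^ 2 + Real.sin φ * (Real.sin φ - Real.sin (φ + u * Real.sin φ)) := by
    linear_combination -Real.sin_sq_add_cos_sq φ
  have hcos : |Real.cos φ ^ 2| ≤ Real.cos φ := by
    rw [abs_sq, sq]
    exact mul_le_of_le_one_left hφ (Real.cos_le_one φ)
  have hsin : |Real.sin φ - Real.sin (φ + u * Real.sin φ)| ≤ ρ := calc
    _ ≤ |φ - (φ + u * Real.sin φ)| := Real.abs_sin_sub_sin_le _ _
    _ = |u| * |Real.sin φ| := by rw [sub_add_cancel_left, abs_neg, abs_mul]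
    _ ≤ ρ := (mul_le_of_le_one_right (abs_nonneg _) (Real.abs_sin_le_one φ)).trans hu
  rw [hsplit]
  refine (abs_add_le _ _).trans (add_le_add hcos ?_)
  rw [abs_mul]
  exact (mul_le_of_le_one_left (abs_nonneg _) (Real.abs_sin_le_one φ)).trans hsin

theorem abs_add_cos_sub_add_cos_le {φ ρ u v : ℝ} (hφ : 0 ≤ Real.cos φ) (hu : |u| ≤ ρ)
    (hv : |v| ≤ ρ) :
    |(u + Real.cos (φ + u * Real.sin φ)) - (v + Real.cos (φ + v * Real.sin φ))| ≤
      (Real.cos φ + ρ) * |u - v| := by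
  have hderiv (s : ℝ) : HasDerivAt (fun s => s + Real.cos (φ + s * Real.sin φ))
      (1 - Real.sin φ * Real.sin (φ + s * Real.sin φ)) s := by
    refine ((hasDerivAt_id s).add
      (((hasDerivAt_id s).mul_const (Real.sin φ)).const_add φ).cos).congr_deriv ?_
    simp only [id]
    ring
  exact (convex_Icc (-ρ) ρ).norm_image_sub_le_of_norm_hasDerivWithin_le
    (fun s _ => (hderiv s).hasDerivWithinAt)
    (fun s hs => abs_one_sub_sin_mul_sin_add_le hφ (abs_le.2 hs)) (abs_le.1 hv) (abs_le.1 hu)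

theorem hasDerivAt_coe (g : smoothFunctions) (t : ℝ) :
    HasDerivAt g.1 (deriv g.1 t) t :=
  ((contDiff_coe g).differentiable (by simp) t).hasDerivAt

theorem continuous_deriv_coe (g : smoothFunctions) : Continuous (deriv g.1) :=
  (contDiff_coe g).continuous_deriv (by simp)

theorem abs_deriv_correctedPhase_le {φ w : smoothFunctions} {ρ t : ℝ} (hw : |w.1 t| ≤ ρ)
    (hw' : |deriv w.1 t| ≤ ρ) :
    |deriv (correctedPhase φ w).1 t| ≤ (1 + ρ) * |deriv φ.1 t| + ρ := by
  have hderiv :=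
    ((hasDerivAt_coe φ t).add ((hasDerivAt_coe w t).mul (hasDerivAt_coe φ t).sin)).deriv
  have hfirst : |deriv w.1 t * Real.sin (φ.1 t)| ≤ ρ := by
    rw [abs_mul]
    exact (mul_le_of_le_one_right (abs_nonneg _) (Real.abs_sin_le_one _)).trans hw'
  have hsecond : |w.1 t * (Real.cos (φ.1 t) * deriv φ.1 t)| ≤ ρ * |deriv φ.1 t| := by
    rw [abs_mul, abs_mul]
    exact mul_le_mul hw (mul_le_of_le_one_left (abs_nonneg _) (Real.abs_cos_le_one _))
      (by positivity) ((abs_nonneg _).trans hw)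
  calc |deriv (correctedPhase φ w).1 t|
      = |deriv φ.1 t + (deriv w.1 t * Real.sin (φ.1 t) +
          w.1 t * (Real.cos (φ.1 t) * deriv φ.1 t))| := congrArg _ hderiv
    _ ≤ |deriv φ.1 t| + (ρ + ρ * |deriv φ.1 t|) :=
        (abs_add_le _ _).trans
          (add_le_add_right ((abs_add_le _ _).trans (add_le_add hfirst hsecond)) _)
    _ = (1 + ρ) * |deriv φ.1 t| + ρ := by ring

theorem integral_abs_deriv_correctedPhase_le {a b : ℝ} (hab : a ≤ b) {φ w : smoothFunctions} {ρ : ℝ}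
    (hw : ∀ t ∈ Icc a b, |w.1 t| ≤ ρ) (hw' : ∀ t ∈ Icc a b, |deriv w.1 t| ≤ ρ) :
    ∫ t in a..b, |deriv (correctedPhase φ w).1 t| ≤
      (1 + ρ) * (∫ t in a..b, |deriv φ.1 t|) + ρ * (b - a) := by
  have hφ := (continuous_deriv_coe φ).abs
  calc _ ≤ ∫ t in a..b, ((1 + ρ) * |deriv φ.1 t| + ρ) :=
        intervalIntegral.integral_mono_on hab
          ((continuous_deriv_coe _).abs.intervalIntegrable _ _)
          (((hφ.const_mul _).add continuous_const).intervalIntegrable _ _)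
          fun t ht => abs_deriv_correctedPhase_le (hw t ht) (hw' t ht)
    _ = _ := by
        rw [intervalIntegral.integral_add ((hφ.const_mul _).intervalIntegrable _ _)
          intervalIntegrable_const, intervalIntegral.integral_const_mul,
          intervalIntegral.integral_const, smul_eq_mul, mul_comm (b - a)]

variable {E : Type*} [NormedAddCommGroup E] [NormedSpace ℝ E] {μ : Measure ℝ} {a b : ℝ} {f : ℝ → E}

theorem integrableOn_smul (hf : IntegrableOn f (Icc a b) μ) (g : smoothFunctions) :
    IntegrableOn (fun t => g.1 t • f t) (Icc a b) μ :=
  hf.continuousOn_smul (contDiff_coe g).continuous.continuousOn isCompact_Icc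

/-- The moments of smooth functions with respect to the vector-valued density `f` on `[a, b]`. -/
def momentMap (hf : IntegrableOn f (Icc a b) μ) : smoothFunctions →ₗ[ℝ] E where
  toFun g := ∫ t in Icc a b, g.1 t • f t ∂μ
  map_add' g₁ g₂ := by
    simp only [Submodule.coe_add, Pi.add_apply, add_smul]
    exact integral_add (integrableOn_smul hf g₁) (integrableOn_smul hf g₂)
  map_smul' r g := by
    simp only [Submodule.coe_smul, Pi.smul_apply, smul_assoc, integral_smul, RingHom.id_apply]

theorem norm_momentMap_le (hf : IntegrableOn f (Icc a b) μ) {g : smoothFunctions}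
    {k : ℝ → ℝ} (hk : ContinuousOn k (Icc a b)) (h : ∀ t ∈ Icc a b, |g.1 t| ≤ k t) :
    ‖momentMap hf g‖ ≤ ∫ t in Icc a b, k t * ‖f t‖ ∂μ := by
  refine norm_integral_le_of_norm_le (IntegrableOn.continuousOn_mul hk hf.norm isCompact_Icc) ?_
  filter_upwards [ae_restrict_mem measurableSet_Icc] with t ht
  rw [norm_smul]
  exact mul_le_mul_of_nonneg_right (h t ht) (norm_nonneg _)

theorem continuous_momentMap (hf : IntegrableOn f (Icc a b) μ) {Y : Type*} [TopologicalSpace Y]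
    [FirstCountableTopology Y] {u : Y → smoothFunctions} (hbound : ∀ y t, |(u y).1 t| ≤ 1)
    (hcont : ∀ t, Continuous fun y => (u y).1 t) : Continuous fun y => momentMap hf (u y) :=
  continuous_integral_smul_of_abs_le_one hf
    (fun y => (contDiff_coe (u y)).continuous.aestronglyMeasurable) hbound hcont

theorem exists_section_momentMap [FiniteDimensional ℝ E] (hf : IntegrableOn f (Icc a b) μ) :
    ∃ w : (momentMap hf).range →ₗ[ℝ] smoothFunctions, (∀ c, momentMap hf (w c) = c) ∧
      ∃ B, 0 < B ∧ ∀ c, ∀ t ∈ Icc a b, |(w c).1 t| ≤ B * ‖c‖ ∧ |deriv (w c).1 t| ≤ B * ‖c‖ := by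
  obtain ⟨w, hw⟩ := LinearMap.exists_rightInverse_of_surjective (momentMap hf).rangeRestrict
    (momentMap hf).range_rangeRestrict
  let derivative : smoothFunctions →ₗ[ℝ] ℝ → ℝ :=
    { toFun g := deriv g.1
      map_add' g₁ g₂ := funext fun t => ((hasDerivAt_coe g₁ t).add (hasDerivAt_coe g₂ t)).deriv
      map_smul' r g := funext fun t => ((hasDerivAt_coe g t).const_smul r).deriv }
  obtain ⟨B₀, hB₀, hvalue⟩ := exists_norm_apply_le_mul_norm isCompact_Icc
    (smoothFunctions.subtype ∘ₗ w) fun c => (contDiff_coe (w c)).continuous.continuousOn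
  obtain ⟨B₁, -, hderiv⟩ := exists_norm_apply_le_mul_norm isCompact_Icc
    (derivative ∘ₗ w) fun c => (continuous_deriv_coe (w c)).continuousOn
  refine ⟨w, fun c => congrArg Subtype.val (LinearMap.congr_fun hw c), max B₀ B₁,
    lt_max_of_lt_left hB₀, fun c t ht => ⟨(hvalue c t ht).trans ?_, (hderiv c t ht).trans ?_⟩⟩
  · exact mul_le_mul_of_nonneg_right (le_max_left _ _) (norm_nonneg c)
  · exact mul_le_mul_of_nonneg_right (le_max_right _ _) (norm_nonneg c)

/-- One step of the iteration that solves for the coordinates `c` of a correction `w c` making the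
cosine moments of the phase vanish: the solutions are its fixed points. -/
def correctionStep (hf : IntegrableOn f (Icc a b) μ)
    (w : (momentMap hf).range →ₗ[ℝ] smoothFunctions) (φ : smoothFunctions)
    (c : (momentMap hf).range) : (momentMap hf).range :=
  c + (momentMap hf).rangeRestrict (cosPhase (correctedPhase φ (w c)))

section CorrectionStep

variable {hf : IntegrableOn f (Icc a b) μ} {w : (momentMap hf).range →ₗ[ℝ] smoothFunctions}
  {φ : smoothFunctions} {c d : (momentMap hf).range} {B r : ℝ}

theorem correctionStep_eq_self_iff :
    correctionStep hf w φ c = c ↔ momentMap hf (cosPhase (correctedPhase φ (w c))) = 0 := by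
  rw [correctionStep, add_eq_left]
  exact Subtype.ext_iff

theorem correctionStep_neg : correctionStep hf w (-φ) = correctionStep hf w φ := by
  ext c
  rw [correctionStep, correctionStep, correctedPhase_neg, cosPhase_neg]

theorem norm_correctionStep_zero_le (hφ : ∀ t, 0 ≤ Real.cos (φ.1 t)) :
    ‖correctionStep hf w φ 0‖ ≤ ∫ t in Icc a b, Real.cos (φ.1 t) * ‖f t‖ ∂μ := by
  rw [correctionStep, map_zero, correctedPhase_zero, zero_add]
  exact norm_momentMap_le hf (contDiff_coe (cosPhase φ)).continuous.continuousOn fun t _ =>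
    (abs_of_nonneg (hφ t)).le

theorem norm_correctionStep_sub_le (hw : ∀ c, momentMap hf (w c) = c)
    (hφ : ∀ t, 0 ≤ Real.cos (φ.1 t)) (hB₀ : 0 ≤ B)
    (hB : ∀ c, ∀ t ∈ Icc a b, |(w c).1 t| ≤ B * ‖c‖) (hc : ‖c‖ ≤ r) (hd : ‖d‖ ≤ r) :
    ‖correctionStep hf w φ c - correctionStep hf w φ d‖ ≤
      B * ((∫ t in Icc a b, Real.cos (φ.1 t) * ‖f t‖ ∂μ) +
        B * r * ∫ t in Icc a b, ‖f t‖ ∂μ) * ‖c - d‖ := by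
  have hcoe : ((correctionStep hf w φ c - correctionStep hf w φ d : (momentMap hf).range) : E) =
      momentMap hf ((w c + cosPhase (correctedPhase φ (w c))) -
        (w d + cosPhase (correctedPhase φ (w d)))) := by
    simp [correctionStep, hw]
  have hcos : Continuous fun t => Real.cos (φ.1 t) := (contDiff_coe (cosPhase φ)).continuous
  have hsmall (e : (momentMap hf).range) (he : ‖e‖ ≤ r) (t : ℝ) (ht : t ∈ Icc a b) :
      |(w e).1 t| ≤ B * r := (hB e t ht).trans (by gcongr)
  have hpointwise : ∀ t ∈ Icc a b,
      |((w c + cosPhase (correctedPhase φ (w c))) -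
          (w d + cosPhase (correctedPhase φ (w d)))).1 t| ≤
        (Real.cos (φ.1 t) + B * r) * (B * ‖c - d‖) := fun t ht => by
    have hsub : |(w c).1 t - (w d).1 t| ≤ B * ‖c - d‖ := by simpa using hB (c - d) t ht
    refine (abs_add_cos_sub_add_cos_le (hφ t) (hsmall c hc t ht) (hsmall d hd t ht)).trans ?_
    exact mul_le_mul_of_nonneg_left hsub
      (add_nonneg (hφ t) ((abs_nonneg _).trans (hsmall c hc t ht)))
  calc ‖correctionStep hf w φ c - correctionStep hf w φ d‖
      ≤ ∫ t in Icc a b, (Real.cos (φ.1 t) + B * r) * (B * ‖c - d‖) * ‖f t‖ ∂μ := by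
        rw [Submodule.coe_norm, hcoe]
        exact norm_momentMap_le hf ((hcos.add continuous_const).mul_const _).continuousOn hpointwise
    _ = ∫ t in Icc a b, B * ‖c - d‖ * (Real.cos (φ.1 t) * ‖f t‖ + B * r * ‖f t‖) ∂μ := by
        congr with t
        ring
    _ = _ := by
        rw [integral_const_mul, integral_add
          (IntegrableOn.continuousOn_mul hcos.continuousOn hf.norm isCompact_Icc)
          (hf.norm.const_mul _), integral_const_mul]
        ring

theorem lipschitzOnWith_correctionStep (hw : ∀ c, momentMap hf (w c) = c)
    (hφ : ∀ t, 0 ≤ Real.cos (φ.1 t)) (hB₀ : 0 ≤ B)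
    (hB : ∀ c, ∀ t ∈ Icc a b, |(w c).1 t| ≤ B * ‖c‖)
    (hcos : ∫ t in Icc a b, Real.cos (φ.1 t) * ‖f t‖ ∂μ ≤ r / 2)
    (hr : B * r * (1 / 2 + B * ∫ t in Icc a b, ‖f t‖ ∂μ) ≤ 1 / 2) :
    LipschitzOnWith (1 / 2) (correctionStep hf w φ) (closedBall 0 r) := by
  refine LipschitzOnWith.of_dist_le_mul fun c hc d hd => ?_
  rw [dist_eq_norm, dist_eq_norm]
  rw [mem_closedBall_zero_iff] at hc hd
  refine (norm_correctionStep_sub_le hw hφ hB₀ hB hc hd).trans ?_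
  push_cast
  gcongr
  refine le_trans ?_ hr
  linear_combination B * hcos

theorem mapsTo_correctionStep (hφ : ∀ t, 0 ≤ Real.cos (φ.1 t))
    (hcos : ∫ t in Icc a b, Real.cos (φ.1 t) * ‖f t‖ ∂μ ≤ r / 2)
    (hlip : LipschitzOnWith (1 / 2) (correctionStep hf w φ) (closedBall 0 r)) :
    Set.MapsTo (correctionStep hf w φ) (closedBall 0 r) (closedBall 0 r) := by
  intro c hc
  have hr : 0 ≤ r := (norm_nonneg c).trans (mem_closedBall_zero_iff.1 hc)
  have hdist := hlip.dist_le_mul c hc 0 (mem_closedBall_self hr)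
  rw [mem_closedBall_zero_iff] at hc ⊢
  rw [dist_eq_norm, dist_zero_right] at hdist
  push_cast at hdist
  linarith [norm_le_norm_sub_add (correctionStep hf w φ c) (correctionStep hf w φ 0),
    norm_correctionStep_zero_le (hf := hf) (w := w) hφ]

variable [FiniteDimensional ℝ E] {Y : Type*} [TopologicalSpace Y]
  {phase : Y → smoothFunctions}

theorem continuous_correctedPhase_apply (hphase : ∀ t, Continuous fun y => (phase y).1 t)
    {coeff : Y → (momentMap hf).range} (hcoeff : Continuous coeff) (t : ℝ) :
    Continuous fun y => (correctedPhase (phase y) (w (coeff y))).1 t := by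
  have hw : Continuous fun c => (w c).1 t :=
    (LinearMap.proj t ∘ₗ smoothFunctions.subtype ∘ₗ w).continuous_of_finiteDimensional
  exact (hphase t).add ((hw.comp hcoeff).mul (Real.continuous_sin.comp (hphase t)))

theorem continuous_correctionStep [FirstCountableTopology Y]
    (hphase : ∀ t, Continuous fun y => (phase y).1 t)
    (c : (momentMap hf).range) : Continuous fun y => correctionStep hf w (phase y) c :=
  continuous_const.add <| (continuous_momentMap hf (fun _ _ => Real.abs_cos_le_one _) fun t =>
    Real.continuous_cos.comp
      (continuous_correctedPhase_apply hphase continuous_const t)).subtype_mk _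

theorem exists_continuous_even_correction [FirstCountableTopology Y] [Neg Y]
    (hw : ∀ c, momentMap hf (w c) = c) (hB₀ : 0 ≤ B)
    (hB : ∀ c, ∀ t ∈ Icc a b, |(w c).1 t| ≤ B * ‖c‖) (hr₀ : 0 ≤ r)
    (hr : B * r * (1 / 2 + B * ∫ t in Icc a b, ‖f t‖ ∂μ) ≤ 1 / 2)
    (hphase : ∀ t, Continuous fun y => (phase y).1 t) (hodd : ∀ y, phase (-y) = -phase y)
    (hcos₀ : ∀ y t, 0 ≤ Real.cos ((phase y).1 t))
    (hcos : ∀ y, ∫ t in Icc a b, Real.cos ((phase y).1 t) * ‖f t‖ ∂μ ≤ r / 2) :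
    ∃ coeff : Y → (momentMap hf).range, Continuous coeff ∧ (∀ y, coeff (-y) = coeff y) ∧
      ∀ y, ‖coeff y‖ ≤ r ∧
        momentMap hf (cosPhase (correctedPhase (phase y) (w (coeff y)))) = 0 := by
  have hlip (y : Y) := lipschitzOnWith_correctionStep hw (hcos₀ y) hB₀ hB (hcos y) hr
  have hmaps (y : Y) := mapsTo_correctionStep (hcos₀ y) (hcos y) (hlip y)
  let step (y : Y) := (hmaps y).restrict
  have hstep (y : Y) : ContractingWith (1 / 2) (step y) :=
    ⟨NNReal.half_lt_self one_ne_zero, (hlip y).mapsToRestrict (hmaps y)⟩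
  have : Nonempty (closedBall (0 : (momentMap hf).range) r) := ⟨⟨0, mem_closedBall_self hr₀⟩⟩
  have hcont (c : closedBall (0 : (momentMap hf).range) r) : Continuous fun y => step y c :=
    (continuous_correctionStep hphase c.1).subtype_mk _
  let coeff (y : Y) := ContractingWith.fixedPoint (step y) (hstep y)
  have hfix (y : Y) : step y (coeff y) = coeff y := (hstep y).fixedPoint_isFixedPt
  have heven (y : Y) : step (-y) = step y := by
    ext c
    simp only [step, Set.MapsTo.val_restrict_apply, hodd, correctionStep_neg]
  refine ⟨fun y => coeff y, continuous_subtype_val.comp (continuous_fixedPoint hstep hcont),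
    fun y => ?_, fun y => ⟨mem_closedBall_zero_iff.1 (coeff y).2,
      correctionStep_eq_self_iff.1 (congrArg Subtype.val (hfix y))⟩⟩
  exact congrArg Subtype.val ((hstep y).fixedPoint_unique (heven y ▸ hfix (-y)))

end CorrectionStep

theorem exists_correctedPhase_moments_eq_zero [FiniteDimensional ℝ E]
    {hf : IntegrableOn f (Icc a b) μ} {w : (momentMap hf).range →ₗ[ℝ] smoothFunctions} {B r : ℝ}
    {V : Type*} [NormedAddCommGroup V] [NormedSpace ℝ V]
    (hdim : Module.finrank ℝ E < Module.finrank ℝ V) {phase : sphere (0 : V) 1 → smoothFunctions}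
    (hw : ∀ c, momentMap hf (w c) = c) (hB₀ : 0 ≤ B)
    (hB : ∀ c, ∀ t ∈ Icc a b, |(w c).1 t| ≤ B * ‖c‖) (hr₀ : 0 ≤ r)
    (hr : B * r * (1 / 2 + B * ∫ t in Icc a b, ‖f t‖ ∂μ) ≤ 1 / 2)
    (hphase : ∀ t, Continuous fun x => (phase x).1 t) (hodd : ∀ x, phase (-x) = -phase x)
    (hcos₀ : ∀ x t, 0 ≤ Real.cos ((phase x).1 t))
    (hcos : ∀ x, ∫ t in Icc a b, Real.cos ((phase x).1 t) * ‖f t‖ ∂μ ≤ r / 2) :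
    ∃ x c, ‖c‖ ≤ r ∧ momentMap hf (cosPhase (correctedPhase (phase x) (w c))) = 0 ∧
      momentMap hf (sinPhase (correctedPhase (phase x) (w c))) = 0 := by
  obtain ⟨coeff, hcoeff, heven, hzero⟩ :=
    exists_continuous_even_correction hw hB₀ hB hr₀ hr hphase hodd hcos₀ hcos
  obtain ⟨x, hx⟩ := borsuk_ulam hdim
    (g := fun x => momentMap hf (sinPhase (correctedPhase (phase x) (w (coeff x)))))
    (continuous_momentMap hf (fun _ _ => Real.abs_sin_le_one _) fun t =>
      Real.continuous_sin.comp (continuous_correctedPhase_apply hphase hcoeff t))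
    fun x => by rw [hodd, heven, correctedPhase_neg, sinPhase_neg, map_neg]
  exact ⟨x, coeff x, (hzero x).1, (hzero x).2, hx⟩

end Correction

section ArctanPhase

open Polynomial
open Set (Icc)

/-- The phase `arctan ∘ q` of the polynomial `1 + i q`. -/
def arctanPhase (q : ℝ[X]) : smoothFunctions :=
  ⟨fun t => Real.arctan (q.eval t),
    mem_smoothFunctions.2 (by simpa using (q.contDiff_aeval (𝕜 := ℝ) ∞).arctan)⟩

theorem arctanPhase_neg (q : ℝ[X]) : arctanPhase (-q) = -arctanPhase q := by
  ext t
  simp [arctanPhase, Real.arctan_neg]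

variable {V : Type*} [NormedAddCommGroup V] [NormedSpace ℝ V] [FiniteDimensional ℝ V]

theorem continuous_eval_linearMap (p : V →ₗ[ℝ] ℝ[X]) (t : ℝ) : Continuous fun x => (p x).eval t :=
  (leval t ∘ₗ p).continuous_of_finiteDimensional

theorem ae_eval_ne_zero {μ : Measure ℝ} [NullSingletonClass μ] {q : ℝ[X]} (hq : q ≠ 0) :
    ∀ᵐ t ∂μ, q.eval t ≠ 0 :=
  (finite_setOfPred_isRoot hq).countable.ae_notMem μ

theorem exists_forall_integral_cos_arctanPhase_le {μ : Measure ℝ} [NullSingletonClass μ]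
    {p : V →ₗ[ℝ] ℝ[X]} (hp : Function.Injective p) {G : ℝ → ℝ} (hG : Integrable G μ)
    (hG₀ : 0 ≤ G) {δ : ℝ} (hδ : 0 < δ) : ∃ m : ℕ, ∀ x : sphere (0 : V) 1,
      ∫ t, Real.cos ((arctanPhase ((m : ℝ) • p x)).1 t) * G t ∂μ ≤ δ := by
  simpa only [arctanPhase, eval_smul, smul_eq_mul] using
    exists_forall_integral_cos_arctan_mul_le hG hG₀ (u := fun x : sphere (0 : V) 1 => (p x).eval)
      (fun x => (p x).continuous.aestronglyMeasurable)
      (fun t => (continuous_eval_linearMap p t).comp continuous_subtype_val)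
      (fun x => ae_eval_ne_zero ((map_ne_zero_iff p hp).2 (ne_zero_of_mem_unit_sphere x))) hδ

theorem exists_correctedPhase_arctanPhase_moments_eq_zero {E : Type*} [NormedAddCommGroup E]
    [NormedSpace ℝ E] [FiniteDimensional ℝ E] {μ : Measure ℝ} [NullSingletonClass μ] {a b : ℝ}
    {f : ℝ → E} {hf : IntegrableOn f (Icc a b) μ}
    {w : (momentMap hf).range →ₗ[ℝ] smoothFunctions} {B r : ℝ} {p : V →ₗ[ℝ] ℝ[X]}
    (hp : Function.Injective p) (hdim : Module.finrank ℝ E < Module.finrank ℝ V)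
    (hw : ∀ c, momentMap hf (w c) = c) (hB₀ : 0 ≤ B)
    (hB : ∀ c, ∀ t ∈ Icc a b, |(w c).1 t| ≤ B * ‖c‖) (hr₀ : 0 < r)
    (hr : B * r * (1 / 2 + B * ∫ t in Icc a b, ‖f t‖ ∂μ) ≤ 1 / 2) :
    ∃ x c, ‖c‖ ≤ r ∧ momentMap hf (cosPhase (correctedPhase (arctanPhase (p x)) (w c))) = 0 ∧
      momentMap hf (sinPhase (correctedPhase (arctanPhase (p x)) (w c))) = 0 := by
  obtain ⟨m, hm⟩ := exists_forall_integral_cos_arctanPhase_le hp hf.norm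
    (fun t => norm_nonneg (f t)) (half_pos hr₀)
  obtain ⟨x, hx⟩ := exists_correctedPhase_moments_eq_zero hdim
    (phase := fun x => arctanPhase (p ((m : ℝ) • x.1))) hw hB₀ hB hr₀.le hr
    (fun t => Real.continuous_arctan.comp
      ((continuous_eval_linearMap p t).comp (continuous_subtype_val.const_smul _)))
    (fun x => by rw [← arctanPhase_neg, ← map_neg, ← smul_neg]; rfl)
    (fun x t => (Real.cos_arctan_pos _).le) fun x => by simpa only [map_smul] using hm x
  exact ⟨_, hx⟩

theorem integral_abs_deriv_correctedPhase_arctanPhase_le {n : ℕ} {a b : ℝ} (hab : a ≤ b)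
    {q : ℝ[X]} (hq : q.natDegree ≤ n) {w : smoothFunctions} {ρ : ℝ} (hρ : 0 ≤ ρ)
    (hw : ∀ t ∈ Icc a b, |w.1 t| ≤ ρ) (hw' : ∀ t ∈ Icc a b, |deriv w.1 t| ≤ ρ) :
    ∫ t in a..b, |deriv (correctedPhase (arctanPhase q) w).1 t| ≤
      n * π + ρ * (n * π + (b - a)) := by
  have harctan : ∫ t in a..b, |deriv (arctanPhase q).1 t| ≤ n * π :=
    (integral_abs_deriv_arctan_eval_le hab q).trans (by gcongr)
  calc _ ≤ (1 + ρ) * (n * π) + ρ * (b - a) :=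
        (integral_abs_deriv_correctedPhase_le hab hw hw').trans (by gcongr)
    _ = n * π + ρ * (n * π + (b - a)) := by ring

theorem exists_phase_moments_eq_zero {E : Type*} [NormedAddCommGroup E] [NormedSpace ℝ E]
    [FiniteDimensional ℝ E] {μ : Measure ℝ} [NullSingletonClass μ] {a b ε : ℝ} {f : ℝ → E}
    (hab : a ≤ b) (hf : IntegrableOn f (Icc a b) μ) (hε : 0 < ε) : ∃ ψ : smoothFunctions,
      ∫ t in a..b, |deriv ψ.1 t| < Module.finrank ℝ E * π + ε ∧
      momentMap hf (cosPhase ψ) = 0 ∧ momentMap hf (sinPhase ψ) = 0 := by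
  obtain ⟨w, hw, B, hB₀, hB⟩ := exists_section_momentMap hf
  have hM : 0 ≤ 1 / 2 + B * ∫ t in Icc a b, ‖f t‖ ∂μ := by positivity
  have hV : 0 ≤ Module.finrank ℝ E * π + (b - a) :=
    add_nonneg (by positivity) (sub_nonneg.2 hab)
  obtain ⟨ρ, hρ, hρM, hρV⟩ : ∃ ρ > 0, ρ * (1 / 2 + B * ∫ t in Icc a b, ‖f t‖ ∂μ) ≤ 1 / 2 ∧
      ρ * (Module.finrank ℝ E * π + (b - a)) < ε := by
    obtain ⟨ρ, hρ, hlt⟩ := exists_pos_mul_lt (lt_min one_half_pos hε)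
      ((1 / 2 + B * ∫ t in Icc a b, ‖f t‖ ∂μ) + (Module.finrank ℝ E * π + (b - a)))
    rw [mul_comm, mul_add, lt_min_iff] at hlt
    exact ⟨ρ, hρ, (le_add_of_nonneg_right (mul_nonneg hρ.le hV)).trans hlt.1.le,
      (le_add_of_nonneg_left (mul_nonneg hρ.le hM)).trans_lt hlt.2⟩
  have hBρ : B * (ρ / B) = ρ := mul_div_cancel₀ _ hB₀.ne'
  obtain ⟨x, c, hc, hcos, hsin⟩ := exists_correctedPhase_arctanPhase_moments_eq_zero
    (injective_ofFn (Module.finrank ℝ E + 1)) (by simp) hw hB₀.le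
    (fun c t ht => (hB c t ht).1) (div_pos hρ hB₀) (by rwa [hBρ])
  have hBc : B * ‖c‖ ≤ ρ := hBρ ▸ mul_le_mul_of_nonneg_left hc hB₀.le
  refine ⟨_, ?_, hcos, hsin⟩
  exact (integral_abs_deriv_correctedPhase_arctanPhase_le hab
    (Nat.lt_succ_iff.1 (ofFn_natDegree_lt (Nat.le_add_left 1 _) x)) hρ.le
    (fun t ht => (hB c t ht).1.trans hBc) fun t ht => (hB c t ht).2.trans hBc).trans_lt
    (add_lt_add_right hρV _)

end ArctanPhase

section ExpPhase

open Set (Icc)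

variable {μ : Measure ℝ} {a b : ℝ}

/-- The unit complex number with a given smooth phase. -/
def expPhase (ψ : smoothFunctions) (t : ℝ) : ℂ := Complex.exp (ψ.1 t * Complex.I)

theorem contDiff_expPhase (ψ : smoothFunctions) : ContDiff ℝ ∞ (expPhase ψ) :=
  ((Complex.ofRealCLM.contDiff.comp (contDiff_coe ψ)).mul contDiff_const).cexp

theorem norm_expPhase (ψ : smoothFunctions) (t : ℝ) : ‖expPhase ψ t‖ = 1 :=
  Complex.norm_exp_ofReal_mul_I _

theorem norm_deriv_expPhase (ψ : smoothFunctions) (t : ℝ) :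
    ‖deriv (expPhase ψ) t‖ = |deriv ψ.1 t| := by
  have hderiv : deriv (expPhase ψ) t = expPhase ψ t * (deriv ψ.1 t * Complex.I) :=
    ((hasDerivAt_coe ψ t).ofReal_comp.mul_const Complex.I).cexp.deriv
  rw [hderiv, norm_mul, norm_expPhase, norm_mul, Complex.norm_I, Complex.norm_real, one_mul,
    mul_one, Real.norm_eq_abs]

theorem integral_ofReal_mul_expPhase {g : ℝ → ℝ}
    (hg : IntegrableOn g (Icc a b) μ) (ψ : smoothFunctions) :
    ∫ t in Icc a b, (g t : ℂ) * expPhase ψ t ∂μ =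
      momentMap hg (cosPhase ψ) + momentMap hg (sinPhase ψ) * Complex.I := by
  have hsplit (t : ℝ) : (g t : ℂ) * expPhase ψ t =
      (((cosPhase ψ).1 t • g t : ℝ) : ℂ) + (((sinPhase ψ).1 t • g t : ℝ) : ℂ) * Complex.I := by
    simp only [expPhase, Complex.exp_mul_I, cosPhase, sinPhase, smul_eq_mul, Complex.ofReal_mul,
      Complex.ofReal_cos, Complex.ofReal_sin]
    ring
  simp only [hsplit]
  rw [integral_add (integrableOn_smul hg _).ofReal
    ((integrableOn_smul hg _).ofReal.mul_const _), integral_mul_const,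
    integral_complex_ofReal, integral_complex_ofReal]
  rfl

theorem momentMap_apply {ι : Type*} [Fintype ι] {f : ι → ℝ → ℝ}
    (hf : ∀ j, IntegrableOn (f j) (Icc a b) μ) (g : smoothFunctions) (j : ι) :
    momentMap (Integrable.of_eval hf : IntegrableOn (fun t j => f j t) (Icc a b) μ) g j =
      momentMap (hf j) g :=
  eval_integral (fun j => integrableOn_smul (hf j) g) j

theorem integral_norm_derivWithin_Icc {F : Type*} [NormedAddCommGroup F] [NormedSpace ℝ F]
    {h : ℝ → F} (hh : Differentiable ℝ h) (hab : a < b) :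
    ∫ x in a..b, ‖derivWithin h (Icc a b) x‖ = ∫ x in a..b, ‖deriv h x‖ :=
  intervalIntegral.integral_congr fun x hx => by
    rw [Set.uIcc_of_le hab.le] at hx
    exact congrArg norm ((hh x).derivWithin (uniqueDiffOn_Icc hab x hx))

end ExpPhase

end LazarevLieb

open LazarevLieb in
theorem lazarev_lieb_real_improved_general {μ : Measure ℝ} [NullSingletonClass μ] {a b : ℝ}
    (hab : a ≤ b) {n : ℕ} (f : Fin n → ℝ → ℝ)
    (hf : ∀ j, IntegrableOn (f j) (Set.Icc a b) μ) {ε : ℝ} (hε : 0 < ε) :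
    ∃ h : ℝ → ℂ, ContDiff ℝ ∞ h ∧ (∀ x, ‖h x‖ = 1) ∧
      (∫ x in a..b, ‖h x‖) + (∫ x in a..b, ‖deriv h x‖) < (b - a) + π * n + ε ∧
      ∀ j, ∫ x in a..b, (f j x : ℂ) * h x ∂μ = 0 := by
  obtain ⟨ψ, hψ, hcos, hsin⟩ := exists_phase_moments_eq_zero hab
    (Integrable.of_eval hf : IntegrableOn (fun t j => f j t) (Set.Icc a b) μ) hε
  refine ⟨expPhase ψ, contDiff_expPhase ψ, norm_expPhase ψ, ?_, fun j => ?_⟩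
  · simp only [norm_expPhase, norm_deriv_expPhase,
      intervalIntegral.integral_const, smul_eq_mul, mul_one]
    rw [Module.finrank_fin_fun] at hψ
    linarith
  · rw [intervalIntegral.integral_of_le hab, ← integral_Icc_eq_integral_Ioc,
      integral_ofReal_mul_expPhase (hf j), ← momentMap_apply hf,
      ← momentMap_apply hf, hcos, hsin]
    simp

end

/-- **Improved bound for real-valued `f_j`.** Given integrable real-valued functions
`f 1, …, f n` on `[0,1]` and any `ε > 0`, there is a smooth circle-valued function `h` on
`[0,1]` with `‖h‖_{W^{1,1}} < 1 + π(2n - 1) + ε` annihilating all the `f j` in the sense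
that `∫₀¹ f j · h = 0`. -/
theorem lazarev_lieb_real_improved (n : ℕ) (hn : 1 ≤ n) (f : Fin n → ℝ → ℝ)
    (hf : ∀ j, IntegrableOn (f j) (Set.Icc 0 1)) (ε : ℝ) (hε : 0 < ε) :
    ∃ h : ℝ → ℂ,
      ContDiffOn ℝ (⊤ : ℕ∞) h (Set.Icc 0 1) ∧
      (∀ x ∈ Set.Icc (0:ℝ) 1, ‖h x‖ = 1) ∧
      (∫ x in (0:ℝ)..1, ‖h x‖) + (∫ x in (0:ℝ)..1, ‖derivWithin h (Set.Icc 0 1) x‖)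
        < 1 + Real.pi * (2 * n - 1) + ε ∧
      ∀ j : Fin n, ∫ x in (0:ℝ)..1, (f j x : ℂ) * h x = 0 := by
  obtain ⟨h, hsmooth, hnorm, hlt, hzero⟩ :=
    lazarev_lieb_real_improved_general zero_le_one f hf hε
  refine ⟨h, hsmooth.contDiffOn, fun x _ => hnorm x, ?_, hzero⟩
  rw [LazarevLieb.integral_norm_derivWithin_Icc (hsmooth.differentiable (by simp)) zero_lt_one]
  have hn' : (n : ℝ) ≤ 2 * n - 1 := by linarith [show (1 : ℝ) ≤ n from mod_cast hn]
  linarith [mul_le_mul_of_nonneg_left hn' Real.pi_nonneg]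
end

section
/- There exist f_1, ..., f_n ∈ L^1([0,1]; ℝ) such that for every h ∈ C^1([0,1]; S^1) satisfying ∫_0^1 f_j(x) h(x) dx = 0 for all j = 1, ..., n, one has ‖h‖_{W^{1,1}} > πn + 1. (One may take the f_j to be indicator functions of disjoint subintervals of [0,1].) -/
open MeasureTheory

/-!
On the unit sphere of an inner product space, the angle between two points of a curve is at most
the length of the arc joining them. A curve of length at most `π` therefore stays within angle
`π / 2` of its midpoint, hence in a closed hemisphere whose pole is a point of the curve, and the
component of its mean along that pole is positive. So a curve with zero mean is longer than `π`.
Testing against the indicator functions of `n` intervals that partition `[0, 1]` forces zero mean,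
hence length greater than `π`, on each of them.
-/

open Set InnerProductGeometry
open scoped Real RealInnerProductSpace Topology

section Inner

variable {E : Type*} [NormedAddCommGroup E] [InnerProductSpace ℝ E]

lemma inner_eq_zero_of_hasDerivAt_of_norm_eq_const {γ : ℝ → E} {v : E} {x r : ℝ}
    (hγ : HasDerivAt γ v x) (hr : ∀ᶠ y in 𝓝 x, ‖γ y‖ = r) : ⟪γ x, v⟫ = 0 := by
  have hconst : (fun y ↦ ‖γ y‖ ^ 2) =ᶠ[𝓝 x] fun _ ↦ r ^ 2 := by
    filter_upwards [hr] with y hy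
    rw [hy]
  have hderiv : HasDerivAt (fun y ↦ ‖γ y‖ ^ 2) 0 x :=
    (hasDerivAt_const x _).congr_of_eventuallyEq hconst
  simpa using hγ.norm_sq.unique hderiv

lemma norm_sub_inner_smul_sq {p : E} (hp : ‖p‖ = 1) (e : E) :
    ‖e - ⟪e, p⟫ • p‖ ^ 2 = ‖e‖ ^ 2 - ⟪e, p⟫ ^ 2 := by
  rw [norm_sub_sq_real, real_inner_smul_right, norm_smul, hp, mul_one, Real.norm_eq_abs, sq_abs]
  ring

lemma inner_le_sqrt_mul_norm {p v : E} (hp : ‖p‖ = 1) (hpv : ⟪p, v⟫ = 0) (e : E) :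
    ⟪e, v⟫ ≤ √(‖e‖ ^ 2 - ⟪e, p⟫ ^ 2) * ‖v‖ := by
  calc ⟪e, v⟫ = ⟪e - ⟪e, p⟫ • p, v⟫ := by
        rw [inner_sub_left, real_inner_smul_left, hpv, mul_zero, sub_zero]
    _ ≤ ‖e - ⟪e, p⟫ • p‖ * ‖v‖ := real_inner_le_norm _ _
    _ = √(‖e‖ ^ 2 - ⟪e, p⟫ ^ 2) * ‖v‖ := by
        rw [← norm_sub_inner_smul_sq hp, Real.sqrt_sq (norm_nonneg _)]

end Inner

section IntervalIntegral

lemma exists_integral_eq_half {f : ℝ → ℝ} {a b : ℝ} (hf : IntervalIntegrable f volume a b) :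
    ∃ t ∈ uIcc a b, ∫ x in a..t, f x = (∫ x in a..b, f x) / 2 ∧
      ∫ x in t..b, f x = (∫ x in a..b, f x) / 2 := by
  have hcont : ContinuousOn (fun t ↦ ∫ x in a..t, f x) (uIcc a b) :=
    intervalIntegral.continuousOn_primitive_interval' hf left_mem_uIcc
  have hhalf : (∫ x in a..b, f x) / 2 ∈ uIcc (∫ x in a..a, f x) (∫ x in a..b, f x) := by
    rw [intervalIntegral.integral_same, mem_uIcc]
    grind
  obtain ⟨t, ht, hleft⟩ := intermediate_value_uIcc hcont hhalf
  have hadd := intervalIntegral.integral_add_adjacent_intervals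
    (hf.mono_set (uIcc_subset_uIcc_left ht)) (hf.mono_set (uIcc_subset_uIcc_right ht))
  exact ⟨t, ht, hleft, by linarith⟩

lemma integral_indicator_one_smul {E : Type*} [NormedAddCommGroup E] [NormedSpace ℝ E]
    {a b c d : ℝ} (hac : a ≤ c) (hcd : c ≤ d) (hdb : d ≤ b) (h : ℝ → E) :
    ∫ x in a..b, (Ioc c d).indicator (1 : ℝ → ℝ) x • h x = ∫ x in c..d, h x := by
  have hind : (fun x ↦ (Ioc c d).indicator (1 : ℝ → ℝ) x • h x) = (Ioc c d).indicator h := by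
    ext x
    by_cases hx : x ∈ Ioc c d <;> simp [hx]
  rw [hind, intervalIntegral.integral_of_le (hac.trans (hcd.trans hdb)),
    intervalIntegral.integral_of_le hcd, setIntegral_indicator measurableSet_Ioc,
    inter_eq_self_of_subset_right (Ioc_subset_Ioc hac hdb)]

end IntervalIntegral

/-- `γ` is a curve on the unit sphere, parametrized by `[a, b]` and differentiable in the interior
with derivative `γ'`, whose length `∫ x in a..b, ‖γ' x‖` is finite. -/
structure IsSphericalCurveOn {E : Type*} [NormedAddCommGroup E] [InnerProductSpace ℝ E]
    (γ γ' : ℝ → E) (a b : ℝ) : Prop where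
  continuousOn : ContinuousOn γ (Icc a b)
  hasDerivAt : ∀ x ∈ Ioo a b, HasDerivAt γ (γ' x) x
  norm_eq_one : ∀ x ∈ Icc a b, ‖γ x‖ = 1
  intervalIntegrable : IntervalIntegrable (fun x ↦ ‖γ' x‖) volume a b

namespace IsSphericalCurveOn

variable {E : Type*} [NormedAddCommGroup E] [InnerProductSpace ℝ E] {γ γ' : ℝ → E} {a b c d : ℝ}

lemma of_contDiffOn (hab : a < b) (hγ : ContDiffOn ℝ 1 γ (Icc a b))
    (hnorm : ∀ x ∈ Icc a b, ‖γ x‖ = 1) :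
    IsSphericalCurveOn γ (derivWithin γ (Icc a b)) a b where
  continuousOn := hγ.continuousOn
  hasDerivAt x hx :=
    ((hγ.differentiableOn one_ne_zero) x (Ioo_subset_Icc_self hx)).hasDerivWithinAt.hasDerivAt
      (Icc_mem_nhds hx.1 hx.2)
  norm_eq_one := hnorm
  intervalIntegrable :=
    (hγ.continuousOn_derivWithin (uniqueDiffOn_Icc hab) le_rfl).norm.intervalIntegrable_of_Icc
      hab.le

lemma mono (hγ : IsSphericalCurveOn γ γ' a b) (hac : a ≤ c) (hcd : c ≤ d) (hdb : d ≤ b) :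
    IsSphericalCurveOn γ γ' c d where
  continuousOn := hγ.continuousOn.mono (Icc_subset_Icc hac hdb)
  hasDerivAt x hx := hγ.hasDerivAt x (Ioo_subset_Ioo hac hdb hx)
  norm_eq_one x hx := hγ.norm_eq_one x (Icc_subset_Icc hac hdb hx)
  intervalIntegrable := hγ.intervalIntegrable.mono_set <| by
    rw [uIcc_of_le hcd, uIcc_of_le (hac.trans (hcd.trans hdb))]
    exact Icc_subset_Icc hac hdb

lemma inner_deriv_eq_zero (hγ : IsSphericalCurveOn γ γ' a b) {x : ℝ} (hx : x ∈ Ioo a b) :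
    ⟪γ x, γ' x⟫ = 0 :=
  inner_eq_zero_of_hasDerivAt_of_norm_eq_const (hγ.hasDerivAt x hx) <|
    Filter.mem_of_superset (Icc_mem_nhds hx.1 hx.2) hγ.norm_eq_one

/- The strict bound on `‖e‖` keeps `⟪e, γ x⟫` away from the points `±1`, where `arcsin` is not
differentiable. -/
lemma arcsin_inner_sub_le_of_norm_lt_one (hγ : IsSphericalCurveOn γ γ' a b) (hab : a ≤ b) {e : E}
    (he : ‖e‖ < 1) :
    Real.arcsin ⟪e, γ b⟫ - Real.arcsin ⟪e, γ a⟫ ≤ ∫ x in a..b, ‖γ' x‖ := by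
  have hinner (x : ℝ) (hx : x ∈ Ioo a b) : |⟪e, γ x⟫| < 1 := by
    calc |⟪e, γ x⟫| ≤ ‖e‖ * ‖γ x‖ := abs_real_inner_le_norm _ _
      _ < 1 := by rwa [hγ.norm_eq_one x (Ioo_subset_Icc_self hx), mul_one]
  have hcont : ContinuousOn (fun x ↦ Real.arcsin ⟪e, γ x⟫) (Icc a b) :=
    Real.continuous_arcsin.comp_continuousOn (continuousOn_const.inner hγ.continuousOn)
  have hderiv (x : ℝ) (hx : x ∈ Ioo a b) : HasDerivAt (fun y ↦ Real.arcsin ⟪e, γ y⟫)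
      (1 / √(1 - ⟪e, γ x⟫ ^ 2) * ⟪e, γ' x⟫) x := by
    have hinner_deriv : HasDerivAt (fun y ↦ ⟪e, γ y⟫) ⟪e, γ' x⟫ x := by
      simpa using (hasDerivAt_const x e).inner ℝ (hγ.hasDerivAt x hx)
    obtain ⟨hlower, hupper⟩ := abs_lt.1 (hinner x hx)
    exact (Real.hasDerivAt_arcsin hlower.ne' hupper.ne).comp x hinner_deriv
  have hderiv_le (x : ℝ) (hx : x ∈ Ioo a b) :
      1 / √(1 - ⟪e, γ x⟫ ^ 2) * ⟪e, γ' x⟫ ≤ ‖γ' x‖ := by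
    have hsqrt : 0 < √(1 - ⟪e, γ x⟫ ^ 2) :=
      Real.sqrt_pos.2 (sub_pos.2 ((sq_lt_one_iff_abs_lt_one _).2 (hinner x hx)))
    rw [one_div_mul_eq_div, div_le_iff₀' hsqrt]
    calc ⟪e, γ' x⟫ ≤ √(‖e‖ ^ 2 - ⟪e, γ x⟫ ^ 2) * ‖γ' x‖ :=
          inner_le_sqrt_mul_norm (hγ.norm_eq_one x (Ioo_subset_Icc_self hx))
            (hγ.inner_deriv_eq_zero hx) e
      _ ≤ √(1 - ⟪e, γ x⟫ ^ 2) * ‖γ' x‖ := by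
          gcongr
          exact pow_le_one₀ (norm_nonneg e) he.le
  exact intervalIntegral.sub_le_integral_of_hasDeriv_right_of_le hab hcont
    (fun x hx ↦ (hderiv x hx).hasDerivWithinAt)
    ((intervalIntegrable_iff_integrableOn_Icc_of_le hab).1 hγ.intervalIntegrable) hderiv_le

lemma arcsin_inner_sub_le (hγ : IsSphericalCurveOn γ γ' a b) (hab : a ≤ b) {e : E}
    (he : ‖e‖ ≤ 1) :
    Real.arcsin ⟪e, γ b⟫ - Real.arcsin ⟪e, γ a⟫ ≤ ∫ x in a..b, ‖γ' x‖ := by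
  have hcont : Continuous fun r : ℝ ↦
      Real.arcsin ⟪r • e, γ b⟫ - Real.arcsin ⟪r • e, γ a⟫ := by fun_prop
  have hlim := (hcont.tendsto 1).mono_left (nhdsWithin_le_nhds (s := Iio 1))
  rw [one_smul] at hlim
  refine le_of_tendsto hlim ?_
  filter_upwards [Ioo_mem_nhdsLT zero_lt_one] with r hr
  refine hγ.arcsin_inner_sub_le_of_norm_lt_one hab ?_
  calc ‖r • e‖ = r * ‖e‖ := norm_smul_of_nonneg hr.1.le e
    _ ≤ r := mul_le_of_le_one_right hr.1.le he
    _ < 1 := hr.2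

lemma angle_le_integral_norm (hγ : IsSphericalCurveOn γ γ' a b) (hab : a ≤ b) :
    angle (γ a) (γ b) ≤ ∫ x in a..b, ‖γ' x‖ := by
  have ha : ‖γ a‖ = 1 := hγ.norm_eq_one a (left_mem_Icc.2 hab)
  have hb : ‖γ b‖ = 1 := hγ.norm_eq_one b (right_mem_Icc.2 hab)
  calc angle (γ a) (γ b) = Real.arcsin ⟪γ b, γ b⟫ - Real.arcsin ⟪γ b, γ a⟫ := by
        rw [angle, ha, hb, mul_one, div_one, Real.arccos, real_inner_self_eq_norm_sq, hb, one_pow,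
          Real.arcsin_one, real_inner_comm]
    _ ≤ ∫ x in a..b, ‖γ' x‖ := hγ.arcsin_inner_sub_le hab hb.le

lemma exists_angle_le_half_integral_norm (hγ : IsSphericalCurveOn γ γ' a b) (hab : a ≤ b) :
    ∃ t ∈ Icc a b, ∀ x ∈ Icc a b, angle (γ t) (γ x) ≤ (∫ y in a..b, ‖γ' y‖) / 2 := by
  obtain ⟨t, ht, hleft, hright⟩ := exists_integral_eq_half hγ.intervalIntegrable
  rw [uIcc_of_le hab] at ht
  refine ⟨t, ht, fun x hx ↦ ?_⟩
  rcases le_total x t with hxt | htx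
  · rw [angle_comm, ← hleft]
    refine ((hγ.mono hx.1 hxt ht.2).angle_le_integral_norm hxt).trans ?_
    exact intervalIntegral.integral_mono_interval hx.1 hxt le_rfl
      (.of_forall fun _ ↦ norm_nonneg _) (hγ.mono le_rfl ht.1 ht.2).intervalIntegrable
  · rw [← hright]
    refine ((hγ.mono ht.1 htx hx.2).angle_le_integral_norm htx).trans ?_
    exact intervalIntegral.integral_mono_interval le_rfl htx hx.2
      (.of_forall fun _ ↦ norm_nonneg _) (hγ.mono ht.1 ht.2 le_rfl).intervalIntegrable

lemma exists_inner_nonneg_of_integral_norm_le_pi (hγ : IsSphericalCurveOn γ γ' a b) (hab : a ≤ b)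
    (hlength : ∫ x in a..b, ‖γ' x‖ ≤ π) : ∃ t ∈ Icc a b, ∀ x ∈ Icc a b, 0 ≤ ⟪γ t, γ x⟫ := by
  obtain ⟨t, ht, hangle⟩ := hγ.exists_angle_le_half_integral_norm hab
  refine ⟨t, ht, fun x hx ↦ ?_⟩
  have hacute : angle (γ t) (γ x) ≤ π / 2 := (hangle x hx).trans (by linarith)
  rw [← cos_angle_mul_norm_mul_norm, hγ.norm_eq_one t ht, hγ.norm_eq_one x hx, mul_one, mul_one]
  exact Real.cos_nonneg_of_neg_pi_div_two_le_of_le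
    (by linarith [angle_nonneg (γ t) (γ x), Real.pi_pos]) hacute

variable [CompleteSpace E]

theorem pi_lt_integral_norm_of_integral_eq_zero (hγ : IsSphericalCurveOn γ γ' a b) (hab : a < b)
    (hmean : ∫ x in a..b, γ x = 0) : π < ∫ x in a..b, ‖γ' x‖ := by
  by_contra! hlength
  obtain ⟨t, ht, hnonneg⟩ := hγ.exists_inner_nonneg_of_integral_norm_le_pi hab.le hlength
  have hpos : 0 < ∫ x in a..b, ⟪γ t, γ x⟫ :=
    intervalIntegral.integral_pos hab (continuousOn_const.inner hγ.continuousOn)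
      (fun x hx ↦ hnonneg x (Ioc_subset_Icc_self hx))
      ⟨t, ht, by simp [hγ.norm_eq_one t ht]⟩
  have hzero : ∫ x in a..b, ⟪γ t, γ x⟫ = 0 := by
    have hcomm := (innerSL ℝ (γ t)).intervalIntegral_comp_comm
      (hγ.continuousOn.intervalIntegrable_of_Icc (μ := volume) hab.le)
    simpa [hmean] using hcomm
  exact hpos.ne' hzero

theorem pi_mul_lt_integral_norm_of_partition {p : ℕ → ℝ} {n : ℕ} (hn : n ≠ 0) (hp : StrictMono p)
    (hγ : IsSphericalCurveOn γ γ' (p 0) (p n))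
    (hmean : ∀ j < n, ∫ x in p j..p (j + 1), γ x = 0) :
    π * n < ∫ x in p 0..p n, ‖γ' x‖ := by
  have hpiece (j : ℕ) (hj : j < n) : IsSphericalCurveOn γ γ' (p j) (p (j + 1)) :=
    hγ.mono (hp.monotone j.zero_le) (hp.monotone j.le_succ) (hp.monotone hj)
  calc π * n = ∑ _j ∈ Finset.range n, π := by
        rw [Finset.sum_const, Finset.card_range, nsmul_eq_mul, mul_comm]
    _ < ∑ j ∈ Finset.range n, ∫ x in p j..p (j + 1), ‖γ' x‖ := by
        refine Finset.sum_lt_sum_of_nonempty (Finset.nonempty_range_iff.2 hn) fun j hj ↦ ?_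
        have hjn : j < n := Finset.mem_range.1 hj
        exact (hpiece j hjn).pi_lt_integral_norm_of_integral_eq_zero (hp j.lt_succ_self)
          (hmean j hjn)
    _ = ∫ x in p 0..p n, ‖γ' x‖ :=
        intervalIntegral.sum_integral_adjacent_intervals
          fun j hj ↦ (hpiece j hj).intervalIntegrable

end IsSphericalCurveOn

lemma exists_strictMono_zero_one {n : ℕ} (hn : n ≠ 0) :
    ∃ p : ℕ → ℝ, StrictMono p ∧ p 0 = 0 ∧ p n = 1 := by
  have hn' : (0 : ℝ) < n := by positivity
  exact ⟨fun j ↦ j / n, fun i j hij ↦ by dsimp only; gcongr, by simp, div_self hn'.ne'⟩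

/-- **Lower bound.** There exist integrable real-valued functions `f 1, …, f n` on `[0,1]`
such that every `h ∈ C¹([0,1]; S¹)` with `∫₀¹ f j · h = 0` for all `j` satisfies
`‖h‖_{W^{1,1}} > π n + 1`. -/
theorem lower_bound_exists (n : ℕ) (hn : 1 ≤ n) :
    ∃ f : Fin n → ℝ → ℝ, (∀ j, IntegrableOn (f j) (Set.Icc 0 1)) ∧
      ∀ h : ℝ → ℂ, ContDiffOn ℝ 1 h (Set.Icc 0 1) →
        (∀ x ∈ Set.Icc (0:ℝ) 1, ‖h x‖ = 1) →
        (∀ j : Fin n, ∫ x in (0:ℝ)..1, (f j x : ℂ) * h x = 0) →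
        Real.pi * n + 1 <
          (∫ x in (0:ℝ)..1, ‖h x‖) +
            (∫ x in (0:ℝ)..1, ‖derivWithin h (Set.Icc 0 1) x‖) := by
  have hn0 : n ≠ 0 := Nat.one_le_iff_ne_zero.1 hn
  obtain ⟨p, hp, hp0, hpn⟩ := exists_strictMono_zero_one hn0
  refine ⟨fun j ↦ (Ioc (p j) (p (j + 1))).indicator 1,
    fun j ↦ (integrableOn_const measure_Icc_lt_top.ne).indicator measurableSet_Ioc,
    fun h hC1 hnorm horth ↦ ?_⟩
  have hcurve := IsSphericalCurveOn.of_contDiffOn zero_lt_one hC1 hnorm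
  have hmean (j : ℕ) (hj : j < n) : ∫ x in p j..p (j + 1), h x = 0 := by
    rw [← integral_indicator_one_smul (hp0 ▸ hp.monotone j.zero_le) (hp j.lt_succ_self).le
      (hpn ▸ hp.monotone hj) h]
    simpa only [Complex.real_smul] using horth ⟨j, hj⟩
  have hlength : π * n < ∫ x in (0:ℝ)..1, ‖derivWithin h (Icc 0 1) x‖ := by
    rw [← hp0, ← hpn] at hcurve ⊢
    exact hcurve.pi_mul_lt_integral_norm_of_partition hn0 hp hmean
  have hnorm_integral : ∫ x in (0:ℝ)..1, ‖h x‖ = 1 := by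
    rw [intervalIntegral.integral_congr (g := fun _ ↦ 1) (by rwa [uIcc_of_le zero_le_one])]
    simp
  linarith
end

section
/- Let h ∈ C^1([0,1]; S^1) satisfy ∫_0^1 h(x) dx = 0. Then ‖h‖_{W^{1,1}} > π + 1; equivalently, ∫_0^1 |h'(x)| dx > π. -/
open MeasureTheory

/-!
On the unit sphere the angle between two points is at most the length of any curve joining them.
Hence, seen from the point that halves its length, a curve of length at most `π` stays in a closed
hemisphere. Its mean then has positive inner product with the centre of that hemisphere, so it
cannot vanish. The argument takes place on the unit sphere of an arbitrary real Hilbert space.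
-/

open Set Filter Topology InnerProductGeometry RealInnerProductSpace

theorem exists_mem_uIcc_integral_eq_integral {g : ℝ → ℝ} {a b : ℝ}
    (hg : IntervalIntegrable g volume a b) :
    ∃ t ∈ uIcc a b, ∫ x in a..t, g x = ∫ x in t..b, g x := by
  have hcont : ContinuousOn (fun t ↦ ∫ x in a..t, g x) (uIcc a b) :=
    intervalIntegral.continuousOn_primitive_interval' hg left_mem_uIcc
  have hhalf : (∫ x in a..b, g x) / 2 ∈ uIcc (∫ x in a..a, g x) (∫ x in a..b, g x) := by
    rw [intervalIntegral.integral_same, mem_uIcc]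
    rcases le_total 0 (∫ x in a..b, g x) with hI | hI
    · exact .inl ⟨by linarith, by linarith⟩
    · exact .inr ⟨by linarith, by linarith⟩
  obtain ⟨t, ht, hat⟩ := intermediate_value_uIcc hcont hhalf
  have hadd := intervalIntegral.integral_add_adjacent_intervals
    (hg.mono_set (uIcc_subset_uIcc_left ht)) (hg.mono_set (uIcc_subset_uIcc_right ht))
  exact ⟨t, ht, by linarith⟩

theorem hasDerivWithinAt_integral_Ici {F : Type*} [NormedAddCommGroup F] [NormedSpace ℝ F]
    [CompleteSpace F] {g : ℝ → F} {a b x : ℝ} (hg : ContinuousOn g (Icc a b)) (hx : x ∈ Ico a b) :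
    HasDerivWithinAt (fun u ↦ ∫ y in a..u, g y) (g x) (Ici x) x := by
  have hx' : x ∈ Icc a b := Ico_subset_Icc_self hx
  have := Fact.mk hx'
  have hIcc : HasDerivWithinAt (fun u ↦ ∫ y in a..u, g y) (g x) (Icc a b) x :=
    intervalIntegral.integral_hasDerivWithinAt_right
      ((hg.mono (Icc_subset_Icc_right hx'.2)).intervalIntegrable_of_Icc hx'.1)
      (hg.stronglyMeasurableAtFilter_nhdsWithin measurableSet_Icc x) (hg x hx')
  exact hIcc.mono_of_mem_nhdsWithin (Icc_mem_nhdsGE_of_mem hx)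

theorem hasDerivWithinAt_norm_sub_Ici {F : Type*} [NormedAddCommGroup F] [NormedSpace ℝ F]
    {f : ℝ → F} {f' : F} {x : ℝ} (hf : HasDerivWithinAt f f' (Ici x) x) :
    HasDerivWithinAt (fun z ↦ ‖f z - f x‖) ‖f'‖ (Ici x) x := by
  rw [hasDerivWithinAt_iff_tendsto_slope, Ici_sdiff_left] at hf ⊢
  refine hf.norm.congr' ?_
  filter_upwards [self_mem_nhdsWithin] with z (hz : x < z)
  simp [slope_def_module, norm_smul, abs_of_pos (sub_pos.2 hz)]

section InnerProductSpace

variable {E : Type*} [NormedAddCommGroup E] [InnerProductSpace ℝ E] {h h' : ℝ → E} {a b : ℝ}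

theorem angle_eq_two_mul_arcsin_norm_sub_div_two {x y : E} (hx : ‖x‖ = 1) (hy : ‖y‖ = 1) :
    angle x y = 2 * Real.arcsin (‖x - y‖ / 2) := by
  have hangle_nonneg := angle_nonneg x y
  have hangle_le := angle_le_pi x y
  have hsin_nonneg : 0 ≤ Real.sin (angle x y / 2) :=
    Real.sin_nonneg_of_nonneg_of_le_pi (by linarith) (by linarith)
  have hchord_sq : (‖x - y‖ / 2) ^ 2 = Real.sin (angle x y / 2) ^ 2 := by
    rw [Real.sin_sq_eq_half_sub, mul_div_cancel₀ _ two_ne_zero, cos_angle, div_pow,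
      norm_sub_sq_real, hx, hy]
    ring
  have hchord : Real.sin (angle x y / 2) = ‖x - y‖ / 2 :=
    ((sq_eq_sq₀ (by positivity) hsin_nonneg).1 hchord_sq).symm
  rw [Real.arcsin_eq_of_sin_eq hchord ⟨by linarith, by linarith⟩]
  ring

theorem hasDerivWithinAt_angle_Ici {v : E} {x : ℝ} (hderiv : HasDerivWithinAt h v (Ici x) x)
    (hnorm : ∀ᶠ z in 𝓝[≥] x, ‖h z‖ = 1) :
    HasDerivWithinAt (fun z ↦ angle (h x) (h z)) ‖v‖ (Ici x) x := by
  have hx : ‖h x‖ = 1 := hnorm.self_of_nhdsWithin self_mem_Ici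
  have hchord : HasDerivWithinAt (fun z ↦ ‖h z - h x‖ / 2) (‖v‖ / 2) (Ici x) x :=
    (hasDerivWithinAt_norm_sub_Ici hderiv).div_const 2
  have harcsin : HasDerivAt Real.arcsin 1 (‖h x - h x‖ / 2) := by
    simpa using Real.hasDerivAt_arcsin (x := 0) (by norm_num) (by norm_num)
  have harc : HasDerivWithinAt (fun z ↦ 2 * Real.arcsin (‖h z - h x‖ / 2)) ‖v‖ (Ici x) x :=
    ((harcsin.comp_hasDerivWithinAt x hchord).const_mul 2 |>.congr_deriv (by ring) :)
  have hangle : ∀ᶠ z in 𝓝[≥] x, angle (h x) (h z) = 2 * Real.arcsin (‖h z - h x‖ / 2) := by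
    filter_upwards [hnorm] with z hz
    rw [angle_eq_two_mul_arcsin_norm_sub_div_two hx hz, norm_sub_rev]
  exact harc.congr_of_eventuallyEq_of_mem hangle self_mem_Ici

theorem slope_angle_le_slope_angle_self {x z : ℝ} (u : E) (hx : h x ≠ 0) (hxz : x < z) :
    slope (fun z ↦ angle u (h z)) x z ≤ slope (fun z ↦ angle (h x) (h z)) x z := by
  have htriangle := angle_le_angle_add_angle u (h x) (h z)
  rw [slope_def_field, slope_def_field, angle_self hx]
  exact div_le_div_of_nonneg_right (by linarith) (sub_nonneg.2 hxz.le)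

theorem angle_le_integral_norm_deriv (hab : a ≤ b) (hcont : ContinuousOn h (Icc a b))
    (hderiv : ∀ x ∈ Ico a b, HasDerivWithinAt h (h' x) (Ici x) x)
    (hcont' : ContinuousOn h' (Icc a b)) (hnorm : ∀ x ∈ Icc a b, ‖h x‖ = 1) :
    angle (h a) (h b) ≤ ∫ x in a..b, ‖h' x‖ := by
  have hne : ∀ x ∈ Icc a b, h x ≠ 0 := fun x hx ↦ norm_ne_zero_iff.1 (by simp [hnorm x hx])
  have ha : a ∈ Icc a b := left_mem_Icc.2 hab
  have hangle_cont : ContinuousOn (fun x ↦ angle (h a) (h x)) (Icc a b) := fun x hx ↦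
    (continuousAt_angle (x := (h a, h x)) (hne a ha) (hne x hx)).comp_continuousWithinAt
      (f := fun x ↦ (h a, h x)) (continuousWithinAt_const.prodMk (hcont x hx))
  have hlength_cont : ContinuousOn (fun x ↦ ∫ y in a..x, ‖h' y‖) (Icc a b) := by
    rw [← uIcc_of_le hab]
    exact intervalIntegral.continuousOn_primitive_interval'
      (hcont'.norm.intervalIntegrable_of_Icc hab) left_mem_uIcc
  have hstart : angle (h a) (h a) ≤ ∫ y in a..a, ‖h' y‖ := by simp [angle_self (hne a ha)]
  have hslope : ∀ x ∈ Ico a b, ∀ r, ‖h' x‖ < r →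
      ∃ᶠ z in 𝓝[>] x, slope (fun z ↦ angle (h a) (h z)) x z < r := by
    intro x hx r hr
    have hnorm_near : ∀ᶠ z in 𝓝[≥] x, ‖h z‖ = 1 :=
      mem_of_superset (Icc_mem_nhdsGE_of_mem hx) hnorm
    have hslope_self : ∃ᶠ z in 𝓝[>] x, slope (fun z ↦ angle (h x) (h z)) x z < r :=
      (hasDerivWithinAt_angle_Ici (hderiv x hx) hnorm_near).liminf_right_slope_le hr
    refine (hslope_self.and_eventually self_mem_nhdsWithin).mono fun z ⟨hzr, hxz⟩ ↦ ?_
    exact (slope_angle_le_slope_angle_self (h a) (hne x (Ico_subset_Icc_self hx)) hxz).trans_lt hzr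
  exact image_le_of_liminf_slope_right_le_deriv_boundary hangle_cont hstart hlength_cont
    (fun x hx ↦ hasDerivWithinAt_integral_Ici hcont'.norm hx) hslope (right_mem_Icc.2 hab)

theorem angle_le_integral_norm_derivWithin {s t : ℝ} (hsm : ContDiffOn ℝ 1 h (Icc a b))
    (hnorm : ∀ x ∈ Icc a b, ‖h x‖ = 1) (has : a ≤ s) (hst : s ≤ t) (htb : t ≤ b) :
    angle (h s) (h t) ≤ ∫ x in s..t, ‖derivWithin h (Icc a b) x‖ := by
  rcases hst.eq_or_lt with rfl | hst'
  · have hne : h s ≠ 0 := norm_ne_zero_iff.1 (by simp [hnorm s ⟨has, htb⟩])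
    simp [angle_self hne]
  have hsub : Icc s t ⊆ Icc a b := Icc_subset_Icc has htb
  have hab : a < b := has.trans_lt (hst'.trans_le htb)
  refine angle_le_integral_norm_deriv hst (hsm.continuousOn.mono hsub) (fun x hx ↦ ?_)
    ((hsm.continuousOn_derivWithin (uniqueDiffOn_Icc hab) le_rfl).mono hsub)
    fun x hx ↦ hnorm x (hsub hx)
  have hx' : x ∈ Ico a b := Ico_subset_Ico has htb hx
  exact (hsm.differentiableOn one_ne_zero x (Ico_subset_Icc_self hx')).hasDerivWithinAt
    |>.mono_of_mem_nhdsWithin (Icc_mem_nhdsGE_of_mem hx')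

theorem exists_pi_div_two_lt_angle_of_integral_eq_zero [CompleteSpace E] {t : ℝ} (hab : a < b)
    (hcont : ContinuousOn h (Icc a b)) (hint : ∫ x in a..b, h x = 0) (ht : t ∈ Icc a b)
    (hne : h t ≠ 0) : ∃ x ∈ Icc a b, Real.pi / 2 < angle (h t) (h x) := by
  by_contra! hangle
  have hinner_nonneg : ∀ x ∈ Ioc a b, 0 ≤ ⟪h t, h x⟫ := fun x hx ↦ by
    rw [← cos_angle_mul_norm_mul_norm]
    have hcos : 0 ≤ Real.cos (angle (h t) (h x)) := Real.cos_nonneg_of_neg_pi_div_two_le_of_le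
      (by linarith [angle_nonneg (h t) (h x), Real.pi_pos]) (hangle x (Ioc_subset_Icc_self hx))
    positivity
  have hpos : 0 < ∫ x in a..b, ⟪h t, h x⟫ :=
    intervalIntegral.integral_pos hab (continuousOn_const.inner hcont) hinner_nonneg
      ⟨t, ht, real_inner_self_pos.2 hne⟩
  have hzero : ∫ x in a..b, ⟪h t, h x⟫ = 0 := by
    have hcomm := (innerSL ℝ (h t)).intervalIntegral_comp_comm
      (hcont.intervalIntegrable_of_Icc (μ := volume) hab.le)
    simpa only [innerSL_apply_apply, hint, inner_zero_right] using hcomm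
  exact hpos.ne' hzero

theorem pi_lt_integral_norm_derivWithin_of_integral_eq_zero [CompleteSpace E] (hab : a < b)
    (hsm : ContDiffOn ℝ 1 h (Icc a b)) (hnorm : ∀ x ∈ Icc a b, ‖h x‖ = 1)
    (hint : ∫ x in a..b, h x = 0) :
    Real.pi < ∫ x in a..b, ‖derivWithin h (Icc a b) x‖ := by
  have hcont' : ContinuousOn (derivWithin h (Icc a b)) (Icc a b) :=
    hsm.continuousOn_derivWithin (uniqueDiffOn_Icc hab) le_rfl
  have hspeed : IntervalIntegrable (fun x ↦ ‖derivWithin h (Icc a b) x‖) volume a b :=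
    hcont'.norm.intervalIntegrable_of_Icc hab.le
  have hspeed_nonneg (μ : Measure ℝ) : 0 ≤ᵐ[μ] fun x ↦ ‖derivWithin h (Icc a b) x‖ :=
    ae_of_all _ fun _ ↦ norm_nonneg _
  obtain ⟨t, ht, hhalf⟩ := exists_mem_uIcc_integral_eq_integral hspeed
  have hat := hspeed.mono_set (uIcc_subset_uIcc_left ht)
  have htb := hspeed.mono_set (uIcc_subset_uIcc_right ht)
  rw [uIcc_of_le hab.le] at ht
  have hadd := intervalIntegral.integral_add_adjacent_intervals hat htb
  have hne : h t ≠ 0 := norm_ne_zero_iff.1 (by simp [hnorm t ht])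
  obtain ⟨x, hx, hangle⟩ :=
    exists_pi_div_two_lt_angle_of_integral_eq_zero hab hsm.continuousOn hint ht hne
  rcases le_total x t with hxt | htx
  · have hle := angle_le_integral_norm_derivWithin hsm hnorm hx.1 hxt ht.2
    have hmono := intervalIntegral.integral_mono_interval hx.1 hxt le_rfl (hspeed_nonneg _) hat
    rw [angle_comm] at hangle
    linarith
  · have hle := angle_le_integral_norm_derivWithin hsm hnorm ht.1 htx hx.2
    have hmono := intervalIntegral.integral_mono_interval le_rfl htx hx.2 (hspeed_nonneg _) htb
    linarith

theorem W11_gt_of_integral_zero_general [CompleteSpace E] (hab : a < b)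
    (hsm : ContDiffOn ℝ 1 h (Icc a b)) (hnorm : ∀ x ∈ Icc a b, ‖h x‖ = 1)
    (hint : ∫ x in a..b, h x = 0) :
    Real.pi + (b - a) <
      (∫ x in a..b, ‖h x‖) + (∫ x in a..b, ‖derivWithin h (Icc a b) x‖) ∧
    Real.pi < ∫ x in a..b, ‖derivWithin h (Icc a b) x‖ := by
  have hlength := pi_lt_integral_norm_derivWithin_of_integral_eq_zero hab hsm hnorm hint
  have hmass : ∫ x in a..b, ‖h x‖ = b - a := by
    rw [intervalIntegral.integral_congr (g := fun _ ↦ 1) (uIcc_of_le hab.le ▸ hnorm)]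
    simp
  exact ⟨by linarith, hlength⟩

end InnerProductSpace

/-- If `h ∈ C¹([0,1]; S¹)` satisfies `∫₀¹ h = 0`, then `‖h‖_{W^{1,1}} > π + 1`;
equivalently, `∫₀¹ |h'| > π`. -/
theorem W11_gt_of_integral_zero (h : ℝ → ℂ)
    (hsm : ContDiffOn ℝ 1 h (Set.Icc 0 1))
    (hcirc : ∀ x ∈ Set.Icc (0:ℝ) 1, ‖h x‖ = 1)
    (hint : ∫ x in (0:ℝ)..1, h x = 0) :
    Real.pi + 1 <
      (∫ x in (0:ℝ)..1, ‖h x‖) + (∫ x in (0:ℝ)..1, ‖derivWithin h (Set.Icc 0 1) x‖) ∧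
    Real.pi < ∫ x in (0:ℝ)..1, ‖derivWithin h (Set.Icc 0 1) x‖ := by
  simpa only [sub_zero] using W11_gt_of_integral_zero_general one_pos hsm hcirc hint
end

section
/- For every integer n ≥ 1, let Y_n denote the set of smooth functions h : [0,1] → S^1 with ‖h‖_{W^{1,1}} ≤ 1 + πn, topologized by the L^1-norm. Then there exists a continuous map β : S^n → Y_n with β(−x) = −β(x) for all x ∈ S^n (where −β(x) denotes the pointwise negation of the function β(x)); that is, the ℤ/2-coindex of Y_n is at least n. -/
open MeasureTheory

/-- Membership in `Y_n`: `h` is smooth on `[0,1]`, circle-valued there, and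
`‖h‖_{W^{1,1}} ≤ 1 + π n`. -/
def MemYn (n : ℕ) (h : ℝ → ℂ) : Prop :=
  ContDiffOn ℝ (⊤ : ℕ∞) h (Set.Icc 0 1) ∧
  (∀ x ∈ Set.Icc (0:ℝ) 1, ‖h x‖ = 1) ∧
  (∫ x in (0:ℝ)..1, ‖h x‖) + (∫ x in (0:ℝ)..1, ‖derivWithin h (Set.Icc 0 1) x‖)
    ≤ 1 + Real.pi * n

/-!
Let `k = ⌊n / 2⌋` and regard a nonzero vector of `ℂ ^ (k + 1)` as a polynomial `P` of degree at
most `k`. Its inner part is the product of the Blaschke factors `(z - r) / (1 - r̄ z)` of the roots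
in the open unit disc, while each other root contributes only a constant phase. On the unit circle
the inner part has modulus one, and each Blaschke factor has speed a Poisson kernel, hence length
`2π`; so the inner part is a curve of length at most `2πk ≤ πn`, and `-P` yields its negative.

When a root `r` crosses the circle, its Blaschke factor tends to a constant away from `r`, so the
inner part is `L¹`-continuous as a function of the linear factors of `P`. It is then continuous in
the coefficients as well, because multiplying out the factors is a quotient map from a compact space
of normalized factorizations onto the unit sphere of coefficient vectors. As `ℂ ^ (k + 1)` has real
dimension `2k + 2 ≥ n + 1`, it contains a copy of the sphere `Sⁿ`.
-/

section

open Polynomial ComplexConjugate Filter Topology ContDiff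

section Normalize

variable {V : Type*} [NormedAddCommGroup V] [NormedSpace ℝ V]

theorem continuousAt_normalize {x : V} (hx : x ≠ 0) :
    ContinuousAt (NormedSpace.normalize : V → V) x :=
  (continuousAt_id.norm.inv₀ (norm_ne_zero_iff.2 hx)).smul continuousAt_id

theorem normalize_mul_eq_mul_normalize {A : Type*} [NormedDivisionRing A] [NormedAlgebra ℝ A]
    (a b : A) :
    NormedSpace.normalize (a * b) = NormedSpace.normalize a * NormedSpace.normalize b := by
  simp only [NormedSpace.normalize, norm_mul, mul_inv, smul_mul_smul_comm]

theorem continuousOn_compl_zero_of_continuous_comp {T Z : Type*} [TopologicalSpace T]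
    [CompactSpace T] [TopologicalSpace Z] {φ : T → V} {F : V → Z} (hφ : Continuous φ)
    (hφ_ne : ∀ t, φ t ≠ 0) (hφ_ray : ∀ v ≠ 0, ∃ t, ∃ l : ℝ, 0 < l ∧ v = l • φ t)
    (hF : ∀ l : ℝ, 0 < l → ∀ v, F (l • v) = F v) (hFφ : Continuous (F ∘ φ)) :
    ContinuousOn F {0}ᶜ := by
  have hF_normalize : ∀ v ≠ 0, F (NormedSpace.normalize v) = F v := fun v hv =>
    hF _ (inv_pos.2 (norm_pos_iff.2 hv)) v
  let ν : T → Metric.sphere (0 : V) 1 := fun t =>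
    ⟨NormedSpace.normalize (φ t), by simpa using hφ_ne t⟩
  have hν : Continuous ν := Continuous.subtype_mk
    (continuous_iff_continuousAt.2 fun t =>
      (continuousAt_normalize (hφ_ne t)).comp hφ.continuousAt) _
  have hν_surj : Function.Surjective ν := by
    intro v
    obtain ⟨t, l, hl, hv⟩ := hφ_ray v (ne_zero_of_mem_unit_sphere v)
    refine ⟨t, Subtype.ext ?_⟩
    calc NormedSpace.normalize (φ t) = NormedSpace.normalize (v : V) := by
          rw [hv, NormedSpace.normalize_smul_of_pos hl]
      _ = v := NormedSpace.normalize_eq_self_of_norm_eq_one (norm_eq_of_mem_sphere v)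
  have hF_sphere : Continuous fun v : Metric.sphere (0 : V) 1 => F v := by
    rw [(hν.isClosedMap.isQuotientMap hν hν_surj).continuous_iff]
    exact hFφ.congr fun t => (hF_normalize _ (hφ_ne t)).symm
  rw [continuousOn_iff_continuous_domRestrict]
  have hnormalize : Continuous fun v : ({0}ᶜ : Set V) =>
      (⟨NormedSpace.normalize v,
        mem_sphere_zero_iff_norm.2 (NormedSpace.norm_normalize v.2)⟩ : Metric.sphere (0 : V) 1) :=
    Continuous.subtype_mk (continuous_iff_continuousAt.2 fun v =>
      (continuousAt_normalize v.2).comp continuousAt_subtype_val) _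
  exact (hF_sphere.comp hnormalize).congr fun v => hF_normalize _ v.2

end Normalize

section PolynomialCoefficients

variable {X R : Type*} [TopologicalSpace X] [CommSemiring R] [TopologicalSpace R]
  [IsTopologicalSemiring R]

theorem continuous_coeff_mul {p q : X → R[X]} (hp : ∀ j, Continuous fun x => (p x).coeff j)
    (hq : ∀ j, Continuous fun x => (q x).coeff j) (j : ℕ) :
    Continuous fun x => (p x * q x).coeff j := by
  simp only [coeff_mul]
  exact continuous_finsetSum _ fun ij _ => (hp ij.1).mul (hq ij.2)

theorem continuous_coeff_prod {ι : Type*} (s : Finset ι) {p : ι → X → R[X]}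
    (hp : ∀ i ∈ s, ∀ j, Continuous fun x => (p i x).coeff j) (j : ℕ) :
    Continuous fun x => (∏ i ∈ s, p i x).coeff j := by
  classical
  induction s using Finset.induction_on generalizing j with
  | empty => simpa only [Finset.prod_empty] using continuous_const
  | insert i s hi ih =>
    simp only [Finset.prod_insert hi]
    exact continuous_coeff_mul (hp i (Finset.mem_insert_self i s))
      (ih fun i' hi' => hp i' (Finset.mem_insert_of_mem hi')) j

end PolynomialCoefficients

section OfFn

variable {R : Type*} [Semiring R] [DecidableEq R]

theorem ofFn_ne_zero {n : ℕ} {c : Fin n → R} (hc : c ≠ 0) : ofFn n c ≠ 0 :=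
  (map_ne_zero_iff _ (injective_ofFn n)).2 hc

theorem natDegree_ofFn_succ_le {k : ℕ} (c : Fin (k + 1) → R) : (ofFn (k + 1) c).natDegree ≤ k :=
  Nat.lt_succ_iff.1 (ofFn_natDegree_lt k.succ_pos c)

end OfFn

section LinearPoly

variable {R : Type*} [Semiring R]

/-- The polynomial `a X + b` with coefficient pair `p = (a, b)`. It has degree at most one;
the pairs with `a = 0` stand for linear factors whose root has escaped to infinity. -/
noncomputable def linearPoly (p : R × R) : R[X] := C p.1 * X + C p.2

theorem coeff_zero_linearPoly (p : R × R) : (linearPoly p).coeff 0 = p.2 := by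
  simp [linearPoly]

theorem coeff_one_linearPoly (p : R × R) : (linearPoly p).coeff 1 = p.1 := by
  simp [linearPoly, coeff_C]

theorem linearPoly_ne_zero {p : R × R} (hp : p ≠ 0) : linearPoly p ≠ 0 := fun h =>
  hp (Prod.ext (by rw [← coeff_one_linearPoly, h, coeff_zero, Prod.fst_zero])
    (by rw [← coeff_zero_linearPoly, h, coeff_zero, Prod.snd_zero]))

theorem natDegree_linearPoly_le (p : R × R) : (linearPoly p).natDegree ≤ 1 :=
  natDegree_linear_le

theorem continuous_coeff_linearPoly [TopologicalSpace R] [IsTopologicalSemiring R] (j : ℕ) :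
    Continuous fun p : R × R => (linearPoly p).coeff j := by
  simp only [linearPoly, coeff_add, coeff_C_mul, coeff_C]
  split_ifs <;> fun_prop

theorem linearPoly_eq_norm_mul_normalize (p : ℂ × ℂ) :
    linearPoly p = C (‖p‖ : ℂ) * linearPoly (NormedSpace.normalize p) := by
  conv_lhs => rw [← NormedSpace.norm_smul_normalize p]
  simp only [linearPoly, Prod.smul_fst, Prod.smul_snd, Complex.real_smul, C_mul]
  ring

end LinearPoly

section Factorization

theorem exists_eq_linearPoly_mul {K : Type*} [Field K] [IsAlgClosed K] {k : ℕ} {P : K[X]}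
    (hP : P ≠ 0) (hdeg : P.natDegree ≤ k + 1) :
    ∃ p : K × K, p ≠ 0 ∧ ∃ Q : K[X], Q ≠ 0 ∧ Q.natDegree ≤ k ∧ P = linearPoly p * Q := by
  by_cases hk : P.natDegree ≤ k
  · exact ⟨(0, 1), by simp, P, hP, hk, by simp [linearPoly]⟩
  · obtain ⟨r, hr⟩ := IsAlgClosed.exists_root P fun h =>
      hk (natDegree_eq_zero_iff_degree_le_zero.2 h.le ▸ k.zero_le)
    obtain ⟨Q, rfl⟩ := dvd_iff_isRoot.2 hr
    have hQ : Q ≠ 0 := right_ne_zero_of_mul hP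
    rw [natDegree_mul (X_sub_C_ne_zero r) hQ, natDegree_X_sub_C] at hdeg
    exact ⟨(1, -r), by simp, Q, hQ, by lia, by simp [linearPoly, sub_eq_add_neg]⟩

theorem exists_eq_C_mul_prod_linearPoly {K : Type*} [Field K] [IsAlgClosed K] {k : ℕ} {P : K[X]}
    (hP : P ≠ 0) (hdeg : P.natDegree ≤ k) :
    ∃ c : K, c ≠ 0 ∧ ∃ p : Fin k → K × K, (∀ i, p i ≠ 0) ∧ P = C c * ∏ i, linearPoly (p i) := by
  induction k generalizing P with
  | zero =>
    obtain ⟨c, rfl⟩ := natDegree_eq_zero.1 (Nat.le_zero.1 hdeg)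
    exact ⟨c, C_ne_zero.1 hP, Fin.elim0, fun i => i.elim0, by simp⟩
  | succ k ih =>
    obtain ⟨p, hp, Q, hQ, hQdeg, rfl⟩ := exists_eq_linearPoly_mul hP hdeg
    obtain ⟨c, hc, q, hq, rfl⟩ := ih hQ hQdeg
    refine ⟨c, hc, Fin.cons p q, Fin.cases hp hq, ?_⟩
    rw [Fin.prod_univ_succ]
    simp only [Fin.cons_zero, Fin.cons_succ]
    ring

/-- Normalized data of a factorization into `k` linear factors: a unimodular constant and `k`
coefficient pairs of norm one. This space is compact. -/
abbrev FactorData (k : ℕ) : Type :=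
  Metric.sphere (0 : ℂ) 1 × (Fin k → Metric.sphere (0 : ℂ × ℂ) 1)

/-- The polynomial with the given normalized factorization. -/
noncomputable def FactorData.poly {k : ℕ} (t : FactorData k) : ℂ[X] :=
  C (t.1 : ℂ) * ∏ i, linearPoly (t.2 i : ℂ × ℂ)

namespace FactorData

variable {k : ℕ}

theorem prod_linearPoly_ne_zero (t : FactorData k) :
    ∏ i, linearPoly (t.2 i : ℂ × ℂ) ≠ 0 :=
  Finset.prod_ne_zero_iff.2 fun i _ => linearPoly_ne_zero (ne_zero_of_mem_unit_sphere (t.2 i))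

theorem poly_ne_zero (t : FactorData k) : t.poly ≠ 0 :=
  mul_ne_zero (C_ne_zero.2 (ne_zero_of_mem_unit_sphere t.1)) t.prod_linearPoly_ne_zero

theorem natDegree_poly_le (t : FactorData k) : t.poly.natDegree ≤ k :=
  calc t.poly.natDegree ≤ (∏ i, linearPoly (t.2 i : ℂ × ℂ)).natDegree := natDegree_C_mul_le _ _
    _ ≤ ∑ i, (linearPoly (t.2 i : ℂ × ℂ)).natDegree := natDegree_prod_le _ _
    _ ≤ ∑ _i : Fin k, 1 := Finset.sum_le_sum fun i _ => natDegree_linearPoly_le _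
    _ = k := by simp

theorem continuous_coeff_poly (j : ℕ) : Continuous fun t : FactorData k => t.poly.coeff j := by
  simp only [poly, coeff_C_mul]
  refine Continuous.mul (by fun_prop) (continuous_coeff_prod _ (fun i _ j => ?_) j)
  exact (continuous_coeff_linearPoly j).comp (by fun_prop)

theorem exists_eq_smul_poly {P : ℂ[X]} (hP : P ≠ 0) (hdeg : P.natDegree ≤ k) :
    ∃ (t : FactorData k) (l : ℝ), 0 < l ∧ P = (l : ℂ) • t.poly := by
  obtain ⟨c, hc, p, hp, rfl⟩ := exists_eq_C_mul_prod_linearPoly hP hdeg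
  refine ⟨(⟨NormedSpace.normalize c, by simpa using hc⟩,
    fun i => ⟨NormedSpace.normalize (p i), by simpa using hp i⟩), ‖c‖ * ∏ i, ‖p i‖,
    mul_pos (norm_pos_iff.2 hc) (Finset.prod_pos fun i _ => norm_pos_iff.2 (hp i)), ?_⟩
  have hc_eq : C c = C (‖c‖ : ℂ) * C (NormedSpace.normalize c) := by
    rw [← C_mul, ← Complex.real_smul, NormedSpace.norm_smul_normalize]
  simp only [poly, smul_eq_C_mul, Complex.ofReal_mul, Complex.ofReal_prod, C_mul, map_prod]
  rw [hc_eq, Finset.prod_congr rfl fun i _ => linearPoly_eq_norm_mul_normalize (p i),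
    Finset.prod_mul_distrib]
  ring

end FactorData

end Factorization

section InnerPart

/-- The contribution of a root `r` to the inner part of a polynomial: a Blaschke factor if `r` lies
in the open unit disc, and otherwise the direction of `z - r` at `z = 0`. -/
noncomputable def blaschkeFactor (r z : ℂ) : ℂ :=
  if ‖r‖ < 1 then (z - r) / (1 - conj r * z) else NormedSpace.normalize (-r)

/-- The inner part of a polynomial `P`, that is `P` divided by its outer part, the latter being
normalized to be positive at `0`. -/
noncomputable def innerPart (P : ℂ[X]) (z : ℂ) : ℂ :=
  NormedSpace.normalize P.leadingCoeff * (P.roots.map fun r => blaschkeFactor r z).prod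

theorem innerPart_mul {P Q : ℂ[X]} (hP : P ≠ 0) (hQ : Q ≠ 0) (z : ℂ) :
    innerPart (P * Q) z = innerPart P z * innerPart Q z := by
  simp only [innerPart, leadingCoeff_mul, roots_mul (mul_ne_zero hP hQ), Multiset.map_add,
    Multiset.prod_add, normalize_mul_eq_mul_normalize]
  ring

theorem innerPart_C (c z : ℂ) : innerPart (C c) z = NormedSpace.normalize c := by
  simp [innerPart]

theorem innerPart_prod {ι : Type*} (s : Finset ι) {P : ι → ℂ[X]} (hP : ∀ i ∈ s, P i ≠ 0) (z : ℂ) :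
    innerPart (∏ i ∈ s, P i) z = ∏ i ∈ s, innerPart (P i) z := by
  classical
  induction s using Finset.induction_on with
  | empty => simp [innerPart, NormedSpace.normalize]
  | insert i s hi ih =>
    rw [Finset.forall_mem_insert] at hP
    rw [Finset.prod_insert hi, Finset.prod_insert hi,
      innerPart_mul hP.1 (Finset.prod_ne_zero_iff.2 hP.2), ih hP.2]

theorem innerPart_neg (P : ℂ[X]) (z : ℂ) : innerPart (-P) z = -innerPart P z := by
  simp [innerPart]

theorem innerPart_smul_of_pos {l : ℝ} (hl : 0 < l) (P : ℂ[X]) (z : ℂ) :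
    innerPart ((l : ℂ) • P) z = innerPart P z := by
  have hl' : (l : ℂ) ≠ 0 := Complex.ofReal_ne_zero.2 hl.ne'
  rw [innerPart, roots_smul_nonzero P hl', smul_eq_C_mul, leadingCoeff_mul, leadingCoeff_C,
    ← Complex.real_smul, NormedSpace.normalize_smul_of_pos hl, innerPart]

theorem innerPart_linearPoly (p : ℂ × ℂ) (z : ℂ) :
    innerPart (linearPoly p) z =
      if ‖p.2‖ < ‖p.1‖ then
        NormedSpace.normalize (conj p.1) * ((p.1 * z + p.2) / (conj p.1 + conj p.2 * z))
      else NormedSpace.normalize p.2 := by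
  obtain ⟨a, b⟩ := p
  rcases eq_or_ne a 0 with rfl | ha
  · simp [linearPoly, innerPart_C, (norm_nonneg b).not_gt]
  have hroot : ‖-(a⁻¹ * b)‖ < 1 ↔ ‖b‖ < ‖a‖ := by
    rw [norm_neg, norm_mul, norm_inv, inv_mul_lt_one₀ (norm_pos_iff.2 ha)]
  simp only [innerPart, linearPoly, leadingCoeff_linear ha, roots_C_mul_X_add_C b ha,
    Multiset.map_singleton, Multiset.prod_singleton, blaschkeFactor, hroot]
  split_ifs with hab
  · have hconj : conj a ≠ 0 := by simpa using ha
    have hden : 1 - conj (-(a⁻¹ * b)) * z = (conj a + conj b * z) / conj a := by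
      simp only [map_neg, map_mul, map_inv₀]
      field_simp
      ring
    have hnum : z - -(a⁻¹ * b) = (a * z + b) / a := by field_simp; ring
    rw [hden, hnum]
    simp only [NormedSpace.normalize, RCLike.norm_conj, Complex.real_smul]
    field_simp
  · rw [neg_neg, ← normalize_mul_eq_mul_normalize, mul_inv_cancel_left₀ ha]

theorem FactorData.innerPart_poly {k : ℕ} (t : FactorData k) (z : ℂ) :
    innerPart t.poly z = t.1 * ∏ i, innerPart (linearPoly (t.2 i : ℂ × ℂ)) z := by
  rw [poly, innerPart_mul (C_ne_zero.2 (ne_zero_of_mem_unit_sphere t.1)) t.prod_linearPoly_ne_zero,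
    innerPart_C, NormedSpace.normalize_eq_self_of_norm_eq_one (norm_eq_of_mem_sphere t.1),
    innerPart_prod _ fun i _ => linearPoly_ne_zero (ne_zero_of_mem_unit_sphere (t.2 i))]

end InnerPart

section UnitCircle

variable {z : ℂ}

theorem norm_conj_add_conj_mul (hz : ‖z‖ = 1) (a b : ℂ) :
    ‖conj a + conj b * z‖ = ‖a * z + b‖ := by
  have hzz : z * conj z = 1 := by rw [Complex.mul_conj, Complex.normSq_eq_norm_sq, hz]; simp
  have hfactor : conj a + conj b * z = z * conj (a * z + b) := by
    simp only [map_add, map_mul]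
    linear_combination -conj a * hzz
  rw [hfactor, norm_mul, hz, one_mul, RCLike.norm_conj]

theorem conj_add_conj_mul_ne_zero (hz : ‖z‖ = 1) {a b : ℂ} (h : a * z + b ≠ 0) :
    conj a + conj b * z ≠ 0 := by
  rwa [← norm_ne_zero_iff, norm_conj_add_conj_mul hz, norm_ne_zero_iff]

theorem norm_one_sub_conj_mul (hz : ‖z‖ = 1) (r : ℂ) : ‖1 - conj r * z‖ = ‖z - r‖ := by
  simpa [← sub_eq_add_neg] using norm_conj_add_conj_mul hz 1 (-r)

theorem sub_ne_zero_of_norm_lt_one (hz : ‖z‖ = 1) {r : ℂ} (hr : ‖r‖ < 1) : z - r ≠ 0 :=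
  sub_ne_zero.2 fun h => hr.ne (h ▸ hz)

theorem one_sub_conj_mul_ne_zero (hz : ‖z‖ = 1) {r : ℂ} (hr : ‖r‖ < 1) : 1 - conj r * z ≠ 0 := by
  rw [← norm_ne_zero_iff, norm_one_sub_conj_mul hz, norm_ne_zero_iff]
  exact sub_ne_zero_of_norm_lt_one hz hr

theorem norm_blaschkeFactor (hz : ‖z‖ = 1) (r : ℂ) : ‖blaschkeFactor r z‖ = 1 := by
  rw [blaschkeFactor]
  split_ifs with hr
  · rw [norm_div, norm_one_sub_conj_mul hz,
      div_self (norm_ne_zero_iff.2 (sub_ne_zero_of_norm_lt_one hz hr))]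
  · rw [NormedSpace.norm_normalize_eq_one_iff, neg_ne_zero]
    rintro rfl
    simp at hr

/-- The two cases in `innerPart_linearPoly` agree on the boundary `‖a‖ = ‖b‖`. -/
theorem normalize_conj_mul_div_eq_normalize (hz : ‖z‖ = 1) {a b : ℂ} (hab : ‖a‖ = ‖b‖)
    (h : a * z + b ≠ 0) :
    NormedSpace.normalize (conj a) * ((a * z + b) / (conj a + conj b * z)) =
      NormedSpace.normalize b := by
  have hsq : a * conj a = b * conj b := by
    rw [Complex.mul_conj, Complex.mul_conj, Complex.normSq_eq_norm_sq, Complex.normSq_eq_norm_sq,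
      hab]
  simp only [NormedSpace.normalize, RCLike.norm_conj, Complex.real_smul, hab]
  rw [mul_div_assoc', div_eq_iff (conj_add_conj_mul_ne_zero hz h)]
  linear_combination ((‖b‖⁻¹ : ℝ) : ℂ) * z * hsq

theorem continuousAt_innerPart_linearPoly (hz : ‖z‖ = 1) {p : ℂ × ℂ} (h : p.1 * z + p.2 ≠ 0) :
    ContinuousAt (fun q : ℂ × ℂ => innerPart (linearPoly q) z) p := by
  simp only [innerPart_linearPoly]
  have hinner : p.1 ≠ 0 → ContinuousAt (fun q : ℂ × ℂ =>
      NormedSpace.normalize (conj q.1) * ((q.1 * z + q.2) / (conj q.1 + conj q.2 * z))) p := by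
    intro hp
    have hconj : ContinuousAt (fun q : ℂ × ℂ => NormedSpace.normalize (conj q.1)) p :=
      ContinuousAt.comp (continuousAt_normalize (by simpa using hp)) (by fun_prop)
    exact hconj.mul (ContinuousAt.div (by fun_prop) (by fun_prop)
      (conj_add_conj_mul_ne_zero hz h))
  have houter : p.2 ≠ 0 → ContinuousAt (fun q : ℂ × ℂ => NormedSpace.normalize q.2) p := fun hp =>
    ContinuousAt.comp (continuousAt_normalize hp) continuousAt_snd
  rcases lt_trichotomy ‖p.2‖ ‖p.1‖ with hlt | heq | hgt
  · refine (hinner (norm_pos_iff.1 ((norm_nonneg _).trans_lt hlt))).congr ?_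
    filter_upwards [continuousAt_snd.norm.eventually_lt continuousAt_fst.norm hlt] with q hq
    rw [if_pos hq]
  · have hp₁ : p.1 ≠ 0 := fun hp₁ => h (by simp_all)
    have hp₂ : p.2 ≠ 0 := norm_ne_zero_iff.1 (heq ▸ norm_ne_zero_iff.2 hp₁)
    rw [ContinuousAt, if_neg heq.not_lt]
    refine Tendsto.if' ?_ (houter hp₂)
    rw [← normalize_conj_mul_div_eq_normalize hz heq.symm h]
    exact hinner hp₁
  · refine (houter (norm_pos_iff.1 ((norm_nonneg _).trans_lt hgt))).congr ?_
    filter_upwards [continuousAt_fst.norm.eventually_lt continuousAt_snd.norm hgt] with q hq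
    rw [if_neg hq.not_gt]

end UnitCircle

section UnitLoop

/-- The standard parametrization `s ↦ exp (2 π i s)` of the unit circle by `[0, 1]`. -/
noncomputable def unitLoop (s : ℝ) : ℂ := circleMap 0 1 (2 * Real.pi * s)

theorem norm_unitLoop (s : ℝ) : ‖unitLoop s‖ = 1 := by simp [unitLoop]

theorem contDiff_unitLoop : ContDiff ℝ ∞ unitLoop :=
  (contDiff_circleMap 0 1).comp (by fun_prop)

theorem hasDerivAt_unitLoop (s : ℝ) :
    HasDerivAt unitLoop ((2 * Real.pi : ℝ) • (unitLoop s * Complex.I)) s :=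
  (hasDerivAt_circleMap 0 1 (2 * Real.pi * s)).scomp s (hasDerivAt_const_mul (2 * Real.pi))

theorem integral_comp_unitLoop {E : Type*} [NormedAddCommGroup E] [NormedSpace ℝ E] (f : ℂ → E) :
    ∫ s in (0 : ℝ)..1, f (unitLoop s) = Real.circleAverage f 0 1 := by
  simp only [unitLoop]
  rw [intervalIntegral.integral_comp_mul_left (fun θ => f (circleMap 0 1 θ))
    Real.two_pi_pos.ne', mul_zero, mul_one, Real.circleAverage_def]

theorem integral_poissonKernel_comp_unitLoop {w : ℂ} (hw : ‖w‖ < 1) :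
    ∫ s in (0 : ℝ)..1, poissonKernel 0 w (unitLoop s) = 1 := by
  have hsmul : (poissonKernel 0 w • fun _ : ℂ => (1 : ℝ)) = poissonKernel 0 w :=
    funext fun z => mul_one _
  rw [integral_comp_unitLoop, ← hsmul]
  exact (InnerProductSpace.harmonicContOnCl_const
    (c := (1 : ℝ))).circleAverage_poissonKernel_smul (mem_ball_zero_iff.2 hw)

theorem ae_eval_unitLoop_ne_zero {P : ℂ[X]} (hP : P ≠ 0) : ∀ᵐ s : ℝ, P.eval (unitLoop s) ≠ 0 := by
  have hroots : {z : ℂ | P.IsRoot z}.Countable := (finite_setOfPred_isRoot hP).countable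
  have hpreimage : {s : ℝ | P.IsRoot (unitLoop s)}.Countable :=
    (hroots.preimage_circleMap 0 one_ne_zero).preimage (mul_right_injective₀ Real.two_pi_pos.ne')
  exact measure_mono_null (fun s hs => not_not.1 hs) (hpreimage.measure_zero volume)

end UnitLoop

/-- `h` is a smooth curve in the unit circle whose restriction to `[0, 1]` has length at
most `v`. -/
structure IsCircleCurve (v : ℝ) (h : ℝ → ℂ) : Prop where
  contDiff : ContDiff ℝ ∞ h
  norm_eq_one : ∀ s, ‖h s‖ = 1
  integral_norm_deriv_le : ∫ s in (0 : ℝ)..1, ‖deriv h s‖ ≤ v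

namespace IsCircleCurve

variable {v w : ℝ} {f g : ℝ → ℂ}

theorem mono (hf : IsCircleCurve v f) (hvw : v ≤ w) : IsCircleCurve w f :=
  ⟨hf.contDiff, hf.norm_eq_one, hf.integral_norm_deriv_le.trans hvw⟩

theorem const {c : ℂ} (hc : ‖c‖ = 1) : IsCircleCurve 0 fun _ => c :=
  ⟨contDiff_const, fun _ => hc, by simp⟩

theorem differentiable (hf : IsCircleCurve v f) : Differentiable ℝ f :=
  hf.contDiff.differentiable (by simp)

theorem intervalIntegrable_norm_deriv (hf : IsCircleCurve v f) :
    IntervalIntegrable (fun s => ‖deriv f s‖) volume 0 1 :=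
  (hf.contDiff.continuous_deriv (by simp)).norm.intervalIntegrable 0 1

theorem mul (hf : IsCircleCurve v f) (hg : IsCircleCurve w g) :
    IsCircleCurve (v + w) fun s => f s * g s := by
  have hcontDiff : ContDiff ℝ ∞ fun s => f s * g s := hf.contDiff.mul hg.contDiff
  refine ⟨hcontDiff, fun s => by rw [norm_mul, hf.norm_eq_one, hg.norm_eq_one, one_mul], ?_⟩
  have hderiv (s : ℝ) : ‖deriv (fun s => f s * g s) s‖ ≤ ‖deriv f s‖ + ‖deriv g s‖ := by
    rw [deriv_fun_mul (hf.differentiable s) (hg.differentiable s)]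
    simpa [hf.norm_eq_one, hg.norm_eq_one] using
      norm_add_le (deriv f s * g s) (f s * deriv g s)
  have hintegrable := hf.intervalIntegrable_norm_deriv.add hg.intervalIntegrable_norm_deriv
  calc ∫ s in (0 : ℝ)..1, ‖deriv (fun s => f s * g s) s‖
      ≤ ∫ s in (0 : ℝ)..1, ‖deriv f s‖ + ‖deriv g s‖ :=
        intervalIntegral.integral_mono zero_le_one
          ((hcontDiff.continuous_deriv (by simp)).norm.intervalIntegrable 0 1) hintegrable hderiv
    _ = (∫ s in (0 : ℝ)..1, ‖deriv f s‖) + ∫ s in (0 : ℝ)..1, ‖deriv g s‖ :=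
        intervalIntegral.integral_add hf.intervalIntegrable_norm_deriv
          hg.intervalIntegrable_norm_deriv
    _ ≤ v + w := add_le_add hf.integral_norm_deriv_le hg.integral_norm_deriv_le

theorem multiset_prod_map {ι : Type*} {F : ι → ℝ → ℂ} (hF : ∀ i, IsCircleCurve v (F i))
    (m : Multiset ι) : IsCircleCurve (m.card * v) fun s => (m.map fun i => F i s).prod := by
  induction m using Multiset.induction_on with
  | empty => simpa using const (c := 1) (by simp)
  | cons i m ih =>
    simp only [Multiset.map_cons, Multiset.prod_cons, Multiset.card_cons]
    exact ((hF i).mul ih).mono (by push_cast; linarith)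

theorem memYn {n : ℕ} (hf : IsCircleCurve (Real.pi * n) f) : MemYn n f := by
  refine ⟨hf.contDiff.contDiffOn, fun s _ => hf.norm_eq_one s, ?_⟩
  have hderivWithin : ∫ s in (0 : ℝ)..1, ‖derivWithin f (Set.Icc 0 1) s‖ =
      ∫ s in (0 : ℝ)..1, ‖deriv f s‖ := by
    refine intervalIntegral.integral_congr fun s hs => ?_
    rw [Set.uIcc_of_le zero_le_one] at hs
    simp only [(hf.differentiable s).derivWithin (uniqueDiffOn_Icc zero_lt_one s hs)]
  have hnorm : ∫ s in (0 : ℝ)..1, ‖f s‖ = 1 := by simp [hf.norm_eq_one]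
  rw [hderivWithin, hnorm]
  exact add_le_add_right hf.integral_norm_deriv_le 1

end IsCircleCurve

theorem MemYn.mono {m n : ℕ} {h : ℝ → ℂ} (hh : MemYn m h) (hmn : m ≤ n) : MemYn n h :=
  ⟨hh.1, hh.2.1, hh.2.2.trans (by gcongr)⟩

section LengthOfInnerPart

theorem hasDerivAt_blaschkeFactor {r z : ℂ} (hr : ‖r‖ < 1) (hz : ‖z‖ = 1) :
    HasDerivAt (blaschkeFactor r) ((1 - ‖r‖ ^ 2) / (1 - conj r * z) ^ 2) z := by
  have hfun : blaschkeFactor r = fun z => (z - r) / (1 - conj r * z) :=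
    funext fun z => if_pos hr
  have hnum : HasDerivAt (fun z => z - r) 1 z := (hasDerivAt_id z).sub_const r
  have hden : HasDerivAt (fun z => 1 - conj r * z) (-conj r) z :=
    (hasDerivAt_const_mul (conj r)).const_sub 1
  rw [hfun]
  refine (hnum.fun_div hden (one_sub_conj_mul_ne_zero hz hr)).congr_deriv ?_
  rw [← Complex.mul_conj' r]
  ring

theorem norm_deriv_blaschkeFactor_comp_unitLoop {r : ℂ} (hr : ‖r‖ < 1) (s : ℝ) :
    ‖deriv (fun s => blaschkeFactor r (unitLoop s)) s‖ =
      2 * Real.pi * poissonKernel 0 r (unitLoop s) := by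
  have hderiv : HasDerivAt (fun s => blaschkeFactor r (unitLoop s)) _ s :=
    (hasDerivAt_blaschkeFactor hr (norm_unitLoop s)).comp s (hasDerivAt_unitLoop s)
  have hnum : ‖(1 - ‖r‖ ^ 2 : ℂ)‖ = 1 - ‖r‖ ^ 2 := by
    rw [← Complex.ofReal_pow, ← Complex.ofReal_one, ← Complex.ofReal_sub, Complex.norm_real,
      Real.norm_of_nonneg (sub_nonneg.2 (pow_le_one₀ (norm_nonneg r) hr.le))]
  rw [hderiv.deriv, norm_mul, norm_div, norm_pow, norm_one_sub_conj_mul (norm_unitLoop s), hnum,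
    norm_smul, Real.norm_of_nonneg Real.two_pi_pos.le, norm_mul, norm_unitLoop, Complex.norm_I,
    poissonKernel_def]
  simp only [sub_zero, norm_unitLoop]
  ring

theorem contDiff_blaschkeFactor_comp_unitLoop {r : ℂ} (hr : ‖r‖ < 1) :
    ContDiff ℝ ∞ fun s => blaschkeFactor r (unitLoop s) := by
  simp only [blaschkeFactor, if_pos hr, div_eq_mul_inv]
  exact (contDiff_unitLoop.sub contDiff_const).mul
    ((contDiff_const.sub (contDiff_const.mul contDiff_unitLoop)).inv
      fun s => one_sub_conj_mul_ne_zero (norm_unitLoop s) hr)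

theorem isCircleCurve_blaschkeFactor (r : ℂ) :
    IsCircleCurve (2 * Real.pi) fun s => blaschkeFactor r (unitLoop s) := by
  by_cases hr : ‖r‖ < 1
  · refine ⟨contDiff_blaschkeFactor_comp_unitLoop hr,
      fun s => norm_blaschkeFactor (norm_unitLoop s) r, le_of_eq ?_⟩
    simp only [norm_deriv_blaschkeFactor_comp_unitLoop hr]
    rw [intervalIntegral.integral_const_mul, integral_poissonKernel_comp_unitLoop hr, mul_one]
  · have hconst := norm_blaschkeFactor norm_one r
    simp only [blaschkeFactor, if_neg hr] at hconst ⊢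
    exact (IsCircleCurve.const hconst).mono Real.two_pi_pos.le

theorem isCircleCurve_innerPart {P : ℂ[X]} (hP : P ≠ 0) :
    IsCircleCurve (P.natDegree * (2 * Real.pi)) fun s => innerPart P (unitLoop s) := by
  have hconst : ‖NormedSpace.normalize P.leadingCoeff‖ = 1 :=
    NormedSpace.norm_normalize (leadingCoeff_ne_zero.2 hP)
  refine ((IsCircleCurve.const hconst).mul
    (IsCircleCurve.multiset_prod_map isCircleCurve_blaschkeFactor P.roots)).mono ?_
  rw [zero_add]
  gcongr
  exact P.card_roots'

theorem isCircleCurve_innerPart_ofFn {k : ℕ} {c : Fin (k + 1) → ℂ} (hc : c ≠ 0) :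
    IsCircleCurve (Real.pi * (2 * k : ℕ)) fun s => innerPart (ofFn (k + 1) c) (unitLoop s) := by
  refine (isCircleCurve_innerPart (ofFn_ne_zero hc)).mono ?_
  calc ((ofFn (k + 1) c).natDegree : ℝ) * (2 * Real.pi) ≤ k * (2 * Real.pi) := by
        gcongr
        exact natDegree_ofFn_succ_le c
    _ = Real.pi * (2 * k : ℕ) := by push_cast; ring

end LengthOfInnerPart

section Continuity

theorem FactorData.continuous_integral_norm_innerPart_poly_sub {k : ℕ} {h : ℝ → ℂ}
    (hh : IntervalIntegrable h volume 0 1) :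
    Continuous fun t : FactorData k =>
      ∫ s in (0 : ℝ)..1, ‖innerPart t.poly (unitLoop s) - h s‖ := by
  have hcurve (t : FactorData k) := isCircleCurve_innerPart t.poly_ne_zero
  refine continuous_iff_continuousAt.2 fun t₀ =>
    intervalIntegral.continuousAt_of_dominated_interval (bound := fun s => 1 + ‖h s‖)
      (.of_forall fun t => ?_) (.of_forall fun t => .of_forall fun s _ => ?_)
      (intervalIntegrable_const.add hh.norm) ?_
  · exact ((hcurve t).contDiff.continuous.aestronglyMeasurable.sub
      hh.def'.aestronglyMeasurable).norm
  · rw [norm_norm, ← (hcurve t).norm_eq_one s]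
    exact norm_sub_le _ _
  · have hne : ∀ᵐ s : ℝ, ∀ i, (linearPoly (t₀.2 i : ℂ × ℂ)).eval (unitLoop s) ≠ 0 :=
      ae_all_iff.2 fun i =>
        ae_eval_unitLoop_ne_zero (linearPoly_ne_zero (ne_zero_of_mem_unit_sphere (t₀.2 i)))
    filter_upwards [hne] with s hs _
    simp only [innerPart_poly]
    have hfactor (i : Fin k) : ContinuousAt
        (fun t : FactorData k => innerPart (linearPoly (t.2 i : ℂ × ℂ)) (unitLoop s)) t₀ :=
      ContinuousAt.comp (f := fun t : FactorData k => (t.2 i : ℂ × ℂ))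
        (continuousAt_innerPart_linearPoly (norm_unitLoop s) (by simpa [linearPoly] using hs i))
        (by fun_prop)
    exact ((ContinuousAt.mul (by fun_prop)
      (tendsto_finsetProd _ fun i _ => hfactor i)).sub continuousAt_const).norm

theorem continuousOn_integral_norm_innerPart_ofFn_sub (k : ℕ) {h : ℝ → ℂ}
    (hh : IntervalIntegrable h volume 0 1) :
    ContinuousOn (fun c : Fin (k + 1) → ℂ =>
      ∫ s in (0 : ℝ)..1, ‖innerPart (ofFn (k + 1) c) (unitLoop s) - h s‖) {0}ᶜ := by
  have hofFn_toFn (t : FactorData k) : ofFn (k + 1) (toFn (k + 1) t.poly) = t.poly :=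
    ofFn_comp_toFn_eq_id_of_natDegree_lt (Nat.lt_succ_of_le t.natDegree_poly_le)
  refine continuousOn_compl_zero_of_continuous_comp
    (φ := fun t : FactorData k => toFn (k + 1) t.poly)
    (continuous_pi fun j => FactorData.continuous_coeff_poly (j : ℕ)) ?_ ?_ ?_ ?_
  · exact fun t ht => t.poly_ne_zero (by rw [← hofFn_toFn, ht, map_zero])
  · intro c hc
    obtain ⟨t, l, hl, ht⟩ := FactorData.exists_eq_smul_poly (k := k) (ofFn_ne_zero hc)
      (natDegree_ofFn_succ_le c)
    refine ⟨t, l, hl, ?_⟩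
    rw [← toFn_comp_ofFn_eq_id (k + 1) c, ht, map_smul]
    rfl
  · intro l hl c
    have hsmul : ofFn (k + 1) (l • c) = (l : ℂ) • ofFn (k + 1) c :=
      map_smul (ofFn (k + 1)) (l : ℂ) c
    simp only [hsmul, innerPart_smul_of_pos hl]
  · simpa only [Function.comp_def, hofFn_toFn] using
      FactorData.continuous_integral_norm_innerPart_poly_sub hh

end Continuity

end

theorem coindex_Yn_ge_general {E : Type*} [NormedAddCommGroup E] [NormedSpace ℝ E]
    [FiniteDimensional ℝ E] (k : ℕ) (hE : Module.finrank ℝ E ≤ 2 * (k + 1)) :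
    ∃ β : E → (ℝ → ℂ),
      (∀ x ∈ Metric.sphere (0 : E) 1, MemYn (2 * k) (β x)) ∧
      (∀ x ∈ Metric.sphere (0 : E) 1, β (-x) = fun s => -(β x s)) ∧
      (∀ x ∈ Metric.sphere (0 : E) 1, ∀ ε > (0:ℝ),
        ∃ δ > (0:ℝ), ∀ x' ∈ Metric.sphere (0 : E) 1,
          ‖x' - x‖ < δ → (∫ s in (0:ℝ)..1, ‖β x' s - β x s‖) < ε) := by
  have hfinrank : Module.finrank ℝ E ≤ Module.finrank ℝ (Fin (k + 1) → ℂ) := by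
    simpa [Module.finrank_pi_fintype, mul_comm] using hE
  obtain ⟨e, he⟩ := finrank_le_iff_exists_linearMap.1 hfinrank
  have he_ne : ∀ x ∈ Metric.sphere (0 : E) 1, e x ≠ 0 := fun x hx =>
    (map_ne_zero_iff e he).2 (ne_zero_of_mem_unit_sphere ⟨x, hx⟩)
  refine ⟨fun x s => innerPart (Polynomial.ofFn (k + 1) (e x)) (unitLoop s),
    fun x hx => (isCircleCurve_innerPart_ofFn (he_ne x hx)).memYn, fun x _ => ?_,
    fun x hx ε hε => ?_⟩
  · simp only [map_neg, innerPart_neg]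
  · have hβx := (isCircleCurve_innerPart_ofFn (he_ne x hx)).contDiff.continuous
    have hcont : ContinuousOn _ (Metric.sphere (0 : E) 1) :=
      (continuousOn_integral_norm_innerPart_ofFn_sub k (hβx.intervalIntegrable 0 1)).comp
        e.continuous_of_finiteDimensional.continuousOn he_ne
    obtain ⟨δ, hδ, hclose⟩ := Metric.continuousOn_iff.1 hcont x hx ε hε
    refine ⟨δ, hδ, fun x' hx' hdist => (le_abs_self _).trans_lt ?_⟩
    simpa [Real.dist_eq] using hclose x' hx' (by rwa [dist_eq_norm])

/-- **Lower bound for the coindex.** For `n ≥ 1` there is a map `β : Sⁿ → Y_n`,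
continuous for the `L¹`-topology on `Y_n`, with `β(-x) = -β(x)` pointwise;
hence `coind Y_n ≥ n`. -/
theorem coindex_Yn_ge (n : ℕ) (hn : 1 ≤ n) :
    ∃ β : EuclideanSpace ℝ (Fin (n + 1)) → (ℝ → ℂ),
      (∀ x ∈ Metric.sphere (0 : EuclideanSpace ℝ (Fin (n + 1))) 1, MemYn n (β x)) ∧
      (∀ x ∈ Metric.sphere (0 : EuclideanSpace ℝ (Fin (n + 1))) 1,
        β (-x) = fun s => -(β x s)) ∧
      (∀ x ∈ Metric.sphere (0 : EuclideanSpace ℝ (Fin (n + 1))) 1, ∀ ε > (0:ℝ),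
        ∃ δ > (0:ℝ), ∀ x' ∈ Metric.sphere (0 : EuclideanSpace ℝ (Fin (n + 1))) 1,
          ‖x' - x‖ < δ → (∫ s in (0:ℝ)..1, ‖β x' s - β x s‖) < ε) := by
  obtain ⟨β, hmem, hodd, hcont⟩ := coindex_Yn_ge_general
    (E := EuclideanSpace ℝ (Fin (n + 1))) (n / 2) (by rw [finrank_euclideanSpace_fin]; lia)
  exact ⟨β, fun x hx => (hmem x hx).mono (Nat.mul_div_le n 2), hodd, hcont⟩
end
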